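/- arXiv:2501.02639 — 3 statements merged into one kernel-verified Lean document; each statement's English description precedes it below -/
import Mathlib

section
/- In C[t, z_{11}, ..., z_{nn}], for all 1 ≤ i ≤ j ≤ n the ideal J_i^t · K_j is radical; consequently J_i^t · K_j = J_i^t ∩ K_j. -/
open MvPolynomial

/-- The variable `t` in `ℂ[t, z_{ij} : 1 ≤ i, j ≤ n]`. -/
noncomputable def tt (n : ℕ) : MvPolynomial (Option (Fin n × Fin n)) ℂ := X none

/-- The variable `z_{ij}` in `ℂ[t, z_{ij} : 1 ≤ i, j ≤ n]` (`0`-based indexing). -/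
noncomputable def zz (n : ℕ) (i j : Fin n) : MvPolynomial (Option (Fin n × Fin n)) ℂ :=
  X (some (i, j))

/-- The first row index (row `1` in `1`-based indexing). -/
def row1 (n : ℕ) [NeZero n] : Fin n := ⟨0, Nat.pos_of_ne_zero (NeZero.ne n)⟩

/-- The last row index (row `n` in `1`-based indexing). -/
def rowN (n : ℕ) [NeZero n] : Fin n :=
  ⟨n - 1, Nat.sub_lt (Nat.pos_of_ne_zero (NeZero.ne n)) one_pos⟩

/-- The ideal `J_i^t = ⟨t z_{11} + z_{n1}, …, t z_{1i} + z_{ni}⟩` (so `J_0^t = 0`). -/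
noncomputable def Jt (n : ℕ) [NeZero n] (i : ℕ) :
    Ideal (MvPolynomial (Option (Fin n × Fin n)) ℂ) :=
  Ideal.span {f | ∃ k : Fin n, (k : ℕ) < i ∧ f = tt n * zz n (row1 n) k + zz n (rowN n) k}

/-- The ideal `K_j`, generated by the `j × j` minors `p_B` of `(z_{kℓ})` with row set
`B ⊆ {2, …, n}`, `|B| = j`, and columns `1, …, j`.  (For `j ≤ n` the column index
`b % n` is just `b`; for `j = n` no admissible `B` exists, so `K_n = 0`, and
`K_0 = ⟨det of the empty matrix⟩ = ⊤`, matching the conventions.) -/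
noncomputable def Kt (n : ℕ) [NeZero n] (j : ℕ) :
    Ideal (MvPolynomial (Option (Fin n × Fin n)) ℂ) :=
  Ideal.span {f | ∃ B : Fin j → Fin n, StrictMono B ∧ (∀ a, 1 ≤ (B a : ℕ)) ∧
    f = Matrix.det (Matrix.of fun a b : Fin j =>
      zz n (B a) ⟨(b : ℕ) % n, Nat.mod_lt _ (Nat.pos_of_ne_zero (NeZero.ne n))⟩)}

/-!
Both factors are vanishing ideals, so it suffices to show that the intersection lies in the product.
For this, expand an element of the intersection in powers of a single variable `y`. Its leading
coefficient vanishes at every limit of points of the variety along curves on which `y` has a simple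
pole. The ideal of these limits is again an intersection of the same kind for a smaller problem, so
by induction it is a product. Its generators, multiplied by `y`, are congruent modulo the original
product to polynomials free of `y`, so the degree in `y` can be lowered until `y` no longer occurs.
For the minors `y` is the corner variable of the matrix; for the linear forms it is the entry of the
first row in the last column.
-/

open Function Matrix
open scoped Pointwise Polynomial

section LeadingCoefficients

variable {S R : Type*} [CommRing S] [CommRing R] [Algebra S R] {y : R}

lemma exists_coeff_mem_span_of_mem_ideal_span
    (hy : Surjective (Polynomial.aeval y : S[X] →ₐ[S] R)) {T : Set R} {f : R}
    (hf : f ∈ Ideal.span T) :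
    ∃ F : R[X], (∀ d, F.coeff d ∈ Submodule.span S T) ∧ F.eval y = f := by
  induction hf using Submodule.span_induction with
  | mem g hg =>
    refine ⟨Polynomial.C g, fun d => ?_, Polynomial.eval_C⟩
    rw [Polynomial.coeff_C]
    split_ifs
    exacts [Submodule.subset_span hg, zero_mem _]
  | zero => exact ⟨0, fun _ => zero_mem _, Polynomial.eval_zero⟩
  | add f g _ _ hf hg =>
    obtain ⟨F, hF, rfl⟩ := hf
    obtain ⟨G, hG, rfl⟩ := hg
    exact ⟨F + G, fun d => Polynomial.coeff_add F G d ▸ add_mem (hF d) (hG d),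
      Polynomial.eval_add⟩
  | smul r f _ hf =>
    obtain ⟨F, hF, rfl⟩ := hf
    obtain ⟨G, rfl⟩ := hy r
    refine ⟨G.map (algebraMap S R) * F, fun d => ?_, ?_⟩
    · simp only [Polynomial.coeff_mul, Polynomial.coeff_map, ← Algebra.smul_def]
      exact sum_mem fun x _ => Submodule.smul_mem _ _ (hF x.2)
    · rw [Polynomial.eval_mul, Polynomial.eval_map_algebraMap, smul_eq_mul]

/-- Induction on the degree in `y`: modulo `Q`, the leading term of an expansion can be traded for
a term of smaller degree. -/
lemma le_of_coeff_mul_mem_sup (W : Submodule S R) {I Q : Ideal R} (hQI : Q ≤ I)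
    (hexp : ∀ f ∈ I, ∃ F : R[X], (∀ d, F.coeff d ∈ W) ∧ F.eval y = f)
    (hlead : ∀ (D : ℕ) (F : R[X]), F.natDegree ≤ D → (∀ d, F.coeff d ∈ W) → F.eval y ∈ I →
      F.coeff D * y ∈ Q.restrictScalars S ⊔ W)
    (hfree : ∀ g ∈ W, g ∈ I → g ∈ Q) : I ≤ Q := by
  suffices key : ∀ (D : ℕ) (F : R[X]), F.natDegree ≤ D → (∀ d, F.coeff d ∈ W) → F.eval y ∈ I →
      F.eval y ∈ Q by
    intro f hf
    obtain ⟨F, hF, rfl⟩ := hexp f hf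
    exact key _ F le_rfl hF hf
  intro D
  induction D with
  | zero =>
    intro F hD hF hI
    rw [Polynomial.eq_C_of_natDegree_le_zero hD, Polynomial.eval_C] at hI ⊢
    exact hfree _ (hF 0) hI
  | succ D ih =>
    intro F hD hF hI
    obtain ⟨q, hq, r, hr, hqr⟩ := Submodule.mem_sup.1 (hlead _ F hD hF hI)
    let G : R[X] := F - Polynomial.monomial (D + 1) (F.coeff (D + 1)) + Polynomial.monomial D r
    have hFG : F.eval y = G.eval y + q * y ^ D := by
      simp only [G, Polynomial.eval_add, Polynomial.eval_sub, Polynomial.eval_monomial]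
      linear_combination -y ^ D * hqr
    have hG : ∀ d, G.coeff d ∈ W := fun d => by
      simp only [G, Polynomial.coeff_add, Polynomial.coeff_sub, Polynomial.coeff_monomial]
      refine add_mem (sub_mem (hF d) ?_) ?_ <;> split_ifs
      exacts [hF _, zero_mem _, hr, zero_mem _]
    have hGD : G.natDegree ≤ D := by
      refine Polynomial.natDegree_le_iff_coeff_eq_zero.2 fun d hd => ?_
      rcases (Nat.succ_le_of_lt hd).eq_or_lt' with rfl | hd'
      · simp [G, Polynomial.coeff_monomial]
      · simp [G, Polynomial.coeff_monomial, hd.ne, hd'.ne,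
          Polynomial.coeff_eq_zero_of_natDegree_lt (hD.trans_lt hd')]
    have hqy : q * y ^ D ∈ Q := Q.mul_mem_right _ hq
    rw [hFG] at hI ⊢
    exact add_mem (ih G hGD hG ((Ideal.add_mem_iff_left _ (hQI hqy)).1 hI)) hqy

lemma mul_mem_of_mem_span {P : Submodule S R} {G : Set R} (hG : ∀ g ∈ G, g * y ∈ P) {g : R}
    (hg : g ∈ Submodule.span S G) : g * y ∈ P :=
  Submodule.span_le (p := P.comap (LinearMap.mulRight S y)).2 hG hg

lemma eval_sub_coeff_zero_mem {L : Ideal R} {F : R[X]} (hF : ∀ d, F.coeff d ∈ L) :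
    F.eval y - F.coeff 0 ∈ Ideal.span {y} * L := by
  have hdiv : F.eval y - F.coeff 0 = y * F.divX.eval y := by
    have h := congrArg (Polynomial.eval y) F.divX_mul_X_add
    simp only [Polynomial.eval_add, Polynomial.eval_mul, Polynomial.eval_X,
      Polynomial.eval_C] at h
    linear_combination -h
  rw [hdiv, Polynomial.eval_eq_sum_range]
  refine Ideal.mul_mem_mul (Ideal.mem_span_singleton_self y) (sum_mem fun d _ => ?_)
  rw [Polynomial.coeff_divX]
  exact L.mul_mem_right _ (hF _)

end LeadingCoefficients

section Supported

variable {k τ : Type*} [CommRing k] {s : Set τ}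

lemma exists_leftInverse_supported (s : Set τ) :
    ∃ ρ : MvPolynomial τ k →ₐ[k] supported k s, ∀ f : supported k s, ρ f = f := by
  classical
  let ρ : MvPolynomial τ k →ₐ[k] supported k s :=
    aeval fun u => if h : u ∈ s then ⟨X u, Algebra.subset_adjoin ⟨u, h, rfl⟩⟩ else 0
  have hρ : Set.EqOn ((supported k s).val.comp ρ) (AlgHom.id k (MvPolynomial τ k))
      (supported k s : Set (MvPolynomial τ k)) := by
    refine AlgHom.eqOn_adjoin_iff.2 ?_
    rintro _ ⟨u, hu, rfl⟩
    simp [ρ, hu]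
  exact ⟨ρ, fun f => Subtype.ext (hρ f.2)⟩

lemma mem_span_supported_of_mem_ideal_span {G : Set (MvPolynomial τ k)}
    (hG : G ⊆ supported k s) {c : MvPolynomial τ k} (hc : c ∈ supported k s)
    (hcG : c ∈ Ideal.span G) : c ∈ Submodule.span (supported k s) G := by
  obtain ⟨ρ, hρ⟩ := exists_leftInverse_supported (k := k) s
  suffices h : (ρ c : MvPolynomial τ k) ∈ Submodule.span (supported k s) G by
    rwa [hρ ⟨c, hc⟩] at h
  clear hc
  induction hcG using Submodule.span_induction with
  | mem g hg =>
    rw [hρ ⟨g, hG hg⟩]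
    exact Submodule.subset_span hg
  | zero => simp
  | add f g _ _ hf hg =>
    rw [map_add]
    exact add_mem hf hg
  | smul r f _ hf =>
    rw [smul_eq_mul, map_mul]
    exact Submodule.smul_mem _ (ρ r) hf

lemma aeval_X_surjective_of_supported_compl (y : τ) :
    Surjective (Polynomial.aeval (X y) :
      (supported k {y}ᶜ)[X] →ₐ[supported k {y}ᶜ] MvPolynomial τ k) := by
  let φ := (Polynomial.aeval (X y) :
    (supported k {y}ᶜ)[X] →ₐ[supported k {y}ᶜ] MvPolynomial τ k).restrictScalars k
  suffices h : φ.range = ⊤ from AlgHom.range_eq_top φ |>.1 h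
  refine top_le_iff.1 (adjoin_range_X.symm.le.trans (Algebra.adjoin_le ?_))
  rintro _ ⟨u, rfl⟩
  rcases eq_or_ne u y with rfl | hu
  · exact ⟨Polynomial.X, Polynomial.aeval_X _⟩
  · exact ⟨Polynomial.C ⟨X u, Algebra.subset_adjoin ⟨u, hu, rfl⟩⟩, Polynomial.aeval_C _ _⟩

lemma span_supported_le {T : Set (MvPolynomial τ k)} (hT : T ⊆ supported k s)
    {f : MvPolynomial τ k} (hf : f ∈ Submodule.span (supported k s) T) : f ∈ supported k s := by
  induction hf using Submodule.span_induction with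
  | mem g hg => exact hT hg
  | zero => exact zero_mem _
  | add f g _ _ hf hg => exact add_mem hf hg
  | smul r f _ hf => exact mul_mem r.2 hf

/-- A one-sided form of geometric vertex decomposition with respect to the variable `y`: `G`
generates an ideal containing all leading coefficients in `y` of elements of `I`. -/
lemma le_of_leadingCoeff_mem_span {y : τ} {T G : Set (MvPolynomial τ k)}
    {I Q : Ideal (MvPolynomial τ k)} (hT : T ⊆ supported k {y}ᶜ) (hG : G ⊆ supported k {y}ᶜ)
    (hQI : Q ≤ I) (hIT : I ≤ Ideal.span T)
    (hlead : ∀ (D : ℕ) (F : (MvPolynomial τ k)[X]), F.natDegree ≤ D →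
      (∀ d, F.coeff d ∈ supported k {y}ᶜ) → F.coeff D ∈ Ideal.span T → F.eval (X y) ∈ I →
      F.coeff D ∈ Ideal.span G)
    (hmul : ∀ g ∈ G, g * X y ∈
      Q.restrictScalars (supported k {y}ᶜ) ⊔ Submodule.span (supported k {y}ᶜ) T)
    (hfree : ∀ g ∈ supported k {y}ᶜ, g ∈ I → g ∈ Q) : I ≤ Q := by
  let W := Submodule.span (supported k {y}ᶜ) T
  have hWT : ∀ f ∈ W, f ∈ Ideal.span T :=
    fun f hf => Submodule.span_subset_span (supported k {y}ᶜ) (MvPolynomial τ k) T hf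
  have hWy : ∀ f ∈ W, f ∈ supported k {y}ᶜ := fun f hf => span_supported_le hT hf
  have hspan : ∀ g ∈ Submodule.span (supported k {y}ᶜ) G,
      g * X y ∈ Q.restrictScalars (supported k {y}ᶜ) ⊔ W :=
    fun g hg => mul_mem_of_mem_span hmul hg
  have hexp : ∀ f ∈ I, ∃ F : (MvPolynomial τ k)[X], (∀ d, F.coeff d ∈ W) ∧ F.eval (X y) = f :=
    fun f hf => exists_coeff_mem_span_of_mem_ideal_span (S := supported k {y}ᶜ) (y := X y)
      (aeval_X_surjective_of_supported_compl y) (hIT hf)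
  refine le_of_coeff_mul_mem_sup W hQI hexp (fun D F hD hF hI => ?_) fun g hg => hfree g (hWy g hg)
  have hFy : ∀ d, F.coeff d ∈ supported k {y}ᶜ := fun d => hWy _ (hF d)
  exact hspan _ (mem_span_supported_of_mem_ideal_span hG (hFy D)
    (hlead D F hD hFy (hWT _ (hF D)) hI))

end Supported

section Evaluation

variable {k K τ : Type*} [CommRing k] [CommRing K] [Algebra k K]

lemma aeval_congr_of_mem_supported {s : Set τ} {f : MvPolynomial τ k} (hf : f ∈ supported k s)
    {p q : τ → K} (hpq : Set.EqOn p q s) : aeval p f = aeval q f := by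
  refine (AlgHom.eqOn_adjoin_iff (s := X '' s)).2 ?_ hf
  rintro _ ⟨u, hu, rfl⟩
  simpa using hpq hu

lemma aeval_update_of_mem_supported [DecidableEq τ] {y : τ} {f : MvPolynomial τ k}
    (hf : f ∈ supported k {y}ᶜ) (p : τ → K) (c : K) : aeval (update p y c) f = aeval p f :=
  aeval_congr_of_mem_supported hf fun _ hu => update_of_ne hu c p

lemma aeval_eval_X_of_eq_zero (F : (MvPolynomial τ k)[X]) {y : τ} {p : τ → K} (hp : p y = 0) :
    aeval p (F.eval (X y)) = aeval p (F.coeff 0) := by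
  have h := congrArg (fun G => aeval p (G.eval (X y))) F.divX_mul_X_add
  simpa [hp] using h.symm

lemma exists_polynomial_eval_eq_aeval_line (p δ : τ → K) (f : MvPolynomial τ k) :
    ∃ P : K[X], ∀ s : K, P.eval s = aeval (p + s • δ) f := by
  refine ⟨aeval (fun u => Polynomial.C (p u) + Polynomial.C (δ u) * Polynomial.X) f,
    fun s => ?_⟩
  rw [← Polynomial.coe_evalRingHom, aeval_def, MvPolynomial.hom_eval₂,
    aeval_def]
  congr 1
  · ext; simp [Polynomial.algebraMap_apply]
  · funext u; simp [mul_comm s]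

variable [IsDomain K] [Infinite K]

lemma eq_zero_of_eval_eq_zero_of_ne {P : K[X]} (s₀ : K) (h : ∀ s ≠ s₀, P.eval s = 0) : P = 0 :=
  Polynomial.eq_zero_of_infinite_isRoot P ((Set.finite_singleton s₀).infinite_compl.mono h)

lemma aeval_eq_zero_of_line {f : MvPolynomial τ k} {p : τ → K} (δ : τ → K) (s₀ : K)
    (h : ∀ s ≠ s₀, aeval (p + s • δ) f = 0) : aeval p f = 0 := by
  obtain ⟨P, hP⟩ := exists_polynomial_eval_eq_aeval_line p δ f
  have hP0 : P = 0 := eq_zero_of_eval_eq_zero_of_ne s₀ fun s hs => (hP s).trans (h s hs)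
  simpa [hP0] using (hP 0).symm

end Evaluation

section VanishingIdeal

variable {k K τ : Type*} [Field k] [Field K] [Algebra k K]

lemma vanishingIdeal_isRadical (V : Set (τ → K)) : (vanishingIdeal k V).IsRadical :=
  fun _ ⟨_, hn⟩ p hp => eq_zero_of_pow_eq_zero ((map_pow _ _ _).symm.trans (hn p hp))

lemma vanishingIdeal_univ [Infinite K] : vanishingIdeal k (Set.univ : Set (τ → K)) = ⊥ := by
  refine eq_bot_iff.2 fun f hf => map_injective _ (algebraMap k K).injective ?_
  refine MvPolynomial.funext fun p => ?_
  rw [eval_map, ← aeval_def, hf p (Set.mem_univ p), map_zero, map_zero]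

/-- Scaled by `s ^ D`, the values along the curve become polynomial in `s`; at `s = 0` only the
leading term survives. -/
lemma aeval_coeff_mul_pow_eq_zero [Infinite K] [DecidableEq τ] {y : τ}
    {F : (MvPolynomial τ k)[X]} {D : ℕ} (hD : F.natDegree ≤ D)
    (hF : ∀ d, F.coeff d ∈ supported k {y}ᶜ) {p : τ → K} (δ : τ → K) (β : K)
    (h : ∀ s ≠ 0, aeval (update (p + s • δ) y (β / s)) (F.eval (X y)) = 0) :
    aeval p (F.coeff D) * β ^ D = 0 := by
  choose P hP using fun d => exists_polynomial_eval_eq_aeval_line p δ (F.coeff d)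
  let Q : K[X] := ∑ d ∈ Finset.range (D + 1),
    P d * Polynomial.C (β ^ d) * Polynomial.X ^ (D - d)
  have hQ : ∀ s ≠ 0, Q.eval s = 0 := fun s hs => by
    calc Q.eval s
        = s ^ D * aeval (update (p + s • δ) y (β / s)) (F.eval (X y)) := by
          rw [Polynomial.eval_eq_sum_range' (Nat.lt_succ_of_le hD), map_sum, Finset.mul_sum,
            Polynomial.eval_finsetSum]
          refine Finset.sum_congr rfl fun d hd => ?_
          have hsD : s ^ D = s ^ (D - d) * s ^ d := by
            rw [← pow_add, Nat.sub_add_cancel (Finset.mem_range_succ_iff.1 hd)]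
          simp only [Polynomial.eval_mul, Polynomial.eval_C, Polynomial.eval_pow,
            Polynomial.eval_X, map_mul, map_pow, aeval_X, update_self, hP,
            aeval_update_of_mem_supported (hF d), hsD, div_pow]
          field_simp
      _ = 0 := by rw [h s hs, mul_zero]
  have hQ0 : Q.eval 0 = aeval p (F.coeff D) * β ^ D := by
    rw [Polynomial.eval_finsetSum, Finset.sum_range_succ, Finset.sum_eq_zero fun d hd => ?_]
    · simp [hP]
    · simp [Nat.sub_ne_zero_of_lt (Finset.mem_range.1 hd)]
  rw [← hQ0, eq_zero_of_eval_eq_zero_of_ne 0 hQ, Polynomial.eval_zero]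

end VanishingIdeal

section Determinants

variable {R C : Type*} [CommRing R] [SetLike C R] [SubringClass C R] {S : C}

lemma det_mem_of_forall_mem {n : Type*} [Fintype n] [DecidableEq n] {N : Matrix n n R}
    (hN : ∀ b a, N b a ∈ S) : N.det ∈ S := by
  rw [det_apply']
  exact sum_mem fun σ _ => mul_mem (intCast_mem S _) (prod_mem fun a _ => hN _ _)

lemma det_sub_mul_det_submatrix_mem {j : ℕ} {N : Matrix (Fin (j + 1)) (Fin (j + 1)) R}
    (hN : ∀ b a, ¬(b = Fin.last j ∧ a = Fin.last j) → N b a ∈ S) :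
    N.det - N (Fin.last j) (Fin.last j) * (N.submatrix Fin.castSucc Fin.castSucc).det ∈ S := by
  rw [det_succ_row N (Fin.last j), Fin.sum_univ_castSucc, Fin.succAbove_last,
    Even.neg_one_pow ⟨_, rfl⟩, one_mul, add_sub_cancel_right]
  refine sum_mem fun a _ => mul_mem (mul_mem (pow_mem (neg_mem (one_mem S)) _)
    (hN _ _ fun h => (Fin.castSucc_lt_last a).ne h.2))
    (det_mem_of_forall_mem fun b _ => hN _ _ fun h => (Fin.castSucc_lt_last b).ne h.1)

end Determinants

section MaximalMinors

variable {k τ : Type*} [CommRing k] {m j : ℕ}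

variable (k) in
/-- The maximal minors of a matrix of variables. The matrix `M` records the indices of the
variables, so its generic entries are `X (M b a)`. -/
def maximalMinors (M : Matrix (Fin m) (Fin j) τ) : Set (MvPolynomial τ k) :=
  {f | ∃ B : Fin j → Fin m, StrictMono B ∧ f = ((M.submatrix B id).map X).det}

variable (k) in
/-- The ideal of maximal minors of the matrix of variables `X (M b a)`, which cuts out the
matrices with linearly dependent columns. -/
noncomputable def minorIdeal (M : Matrix (Fin m) (Fin j) τ) : Ideal (MvPolynomial τ k) :=
  Ideal.span (maximalMinors k M)

lemma maximalMinors_subset_supported {M : Matrix (Fin m) (Fin j) τ} {s : Set τ}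
    (hs : ∀ b a, M b a ∈ s) : maximalMinors k M ⊆ supported k s := by
  rintro _ ⟨B, -, rfl⟩
  exact det_mem_of_forall_mem fun b a => Algebra.subset_adjoin ⟨_, hs _ _, rfl⟩

lemma minorIdeal_eq_top (M : Matrix (Fin m) (Fin 0) τ) : minorIdeal k M = ⊤ :=
  (Ideal.eq_top_iff_one _).2 <| Ideal.subset_span
    ⟨Fin.elim0, Subsingleton.strictMono _, det_fin_zero.symm⟩

lemma minorIdeal_submatrix_castSucc_le (M : Matrix (Fin (m + 1)) (Fin j) τ) :
    minorIdeal k (M.submatrix Fin.castSucc id) ≤ minorIdeal k M :=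
  Ideal.span_mono fun _ ⟨B, hB, hf⟩ => ⟨Fin.castSucc ∘ B, Fin.strictMono_castSucc.comp hB, hf⟩

lemma exists_mem_maximalMinors_sub_mul_mem_supported {M : Matrix (Fin (m + 1)) (Fin (j + 1)) τ}
    (hM : Injective2 M) {f : MvPolynomial τ k}
    (hf : f ∈ maximalMinors k (M.submatrix Fin.castSucc Fin.castSucc)) :
    ∃ g ∈ maximalMinors k M, g - X (M (Fin.last m) (Fin.last j)) * f ∈
      supported k {M (Fin.last m) (Fin.last j)}ᶜ := by
  obtain ⟨B, hB, rfl⟩ := hf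
  let B' : Fin (j + 1) → Fin (m + 1) := Fin.snoc (Fin.castSucc ∘ B) (Fin.last m)
  have hB' : ∀ b, B' b = Fin.last m → b = Fin.last j := by
    refine Fin.lastCases (fun _ => rfl) fun b hb => ?_
    simp [B', (Fin.castSucc_lt_last (B b)).ne] at hb
  have hB'mono : StrictMono B' := by
    refine Fin.lastCases (fun b hb => absurd hb b.le_last.not_gt) fun b => ?_
    refine Fin.lastCases (fun _ => ?_) fun c hbc => ?_
    · simp [B', Fin.castSucc_lt_last]
    · simpa [B'] using hB (Fin.castSucc_lt_castSucc_iff.1 hbc)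
  refine ⟨_, ⟨B', hB'mono, rfl⟩, ?_⟩
  convert det_sub_mul_det_submatrix_mem (S := supported k {M (Fin.last m) (Fin.last j)}ᶜ)
    (N := (M.submatrix B' id).map X) fun b a hba => Algebra.subset_adjoin ⟨_, fun h => ?_, rfl⟩
    using 3
  · simp [B']
  · congr 1
    ext b a
    simp [B']
  · obtain ⟨hb, ha⟩ := hM.eq_iff.1 h
    exact hba ⟨hB' b hb, ha⟩

end MaximalMinors

section Injective2

variable {α β τ : Type*} {M : Matrix α β τ}

lemma injective2_submatrix (hM : Injective2 M) {α' β' : Type*} {f : α' → α} {g : β' → β}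
    (hf : Injective f) (hg : Injective g) : Injective2 (M.submatrix f g) :=
  fun _ _ _ _ h => (hM h).imp (fun h => hf h) fun h => hg h

lemma injective_row_restrict (hM : Injective2 M) (s : Set β) (b : α) :
    Injective fun a : s => M b a :=
  fun _ _ h => Subtype.ext (hM h).2

lemma exists_forall_apply_eq {K : Type*} [Nonempty K] (hM : Injective2 M) (N : Matrix α β K) :
    ∃ p : τ → K, ∀ b a, p (M b a) = N b a := by
  obtain ⟨p, hp⟩ := hM.uncurry.surjective_comp_right (uncurry N)
  exact ⟨p, fun b a => congrFun hp (b, a)⟩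

end Injective2

section DependentLocus

variable {k K τ : Type*} [Field k] [Field K] [Algebra k K] {m j : ℕ}

variable (K) in
/-- The points at which the matrix of variables `X (M b a)` has linearly dependent columns. -/
def dependentLocus (M : Matrix (Fin m) (Fin j) τ) : Set (τ → K) :=
  {p | ∃ v ≠ 0, M.map p *ᵥ v = 0}

lemma mem_dependentLocus {M : Matrix (Fin m) (Fin j) τ} {p : τ → K} :
    p ∈ dependentLocus K M ↔ ∃ v : Fin j → K, v ≠ 0 ∧ ∀ b, ∑ a, p (M b a) * v a = 0 :=
  exists_congr fun _ => and_congr_right fun _ => _root_.funext_iff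

lemma minorIdeal_le_vanishingIdeal (M : Matrix (Fin m) (Fin j) τ) :
    minorIdeal k M ≤ vanishingIdeal k (dependentLocus K M) := by
  refine Ideal.span_le.2 ?_
  rintro _ ⟨B, -, rfl⟩ p ⟨v, hv, hpv⟩
  rw [← AlgHom.coe_toRingHom, RingHom.map_det]
  refine exists_mulVec_eq_zero_iff.1 ⟨v, hv, funext fun b => ?_⟩
  simpa [mulVec, dotProduct] using congrFun hpv (B b)

end DependentLocus

section CornerVariable

variable {k K τ : Type*} [Field k] [Field K] [Algebra k K] {m j : ℕ}
  {M : Matrix (Fin (m + 1)) (Fin (j + 1)) τ}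

lemma update_mem_dependentLocus [DecidableEq τ] (hM : Injective2 M) {p : τ → K} {v : Fin j → K}
    {s : K} (hs : s ≠ 0)
    (hpv : ∀ b : Fin m, ∑ a, p (M b.castSucc a.castSucc) * v a +
      p (M b.castSucc (Fin.last j)) * s = 0) :
    update p (M (Fin.last m) (Fin.last j))
      ((-∑ a, p (M (Fin.last m) a.castSucc) * v a) / s) ∈ dependentLocus K M := by
  refine mem_dependentLocus.2 ⟨Fin.snoc v s, fun h => hs ?_, Fin.lastCases ?_ fun b => ?_⟩
  · simpa using congrFun h (Fin.last j)
  · simp [Fin.sum_univ_castSucc, update_apply, hM.eq_iff, (Fin.castSucc_lt_last _).ne, hs]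
  · simpa [Fin.sum_univ_castSucc, update_apply, hM.eq_iff, (Fin.castSucc_lt_last _).ne] using hpv b

/-- A dependency of the columns of the corner-deleted submatrix lifts to dependencies of the
columns of `M`, along a curve on which the corner entry has a simple pole. -/
lemma exists_line_update_mem_dependentLocus [DecidableEq τ] (hM : Injective2 M) {p : τ → K}
    {v : Fin j → K} (hv : v ≠ 0) (hpv : ∀ b : Fin m, ∑ a, p (M b.castSucc a.castSucc) * v a = 0) :
    ∃ δ : τ → K, ∀ s ≠ 0, update (p + s • δ) (M (Fin.last m) (Fin.last j))
      ((-∑ a, p (M (Fin.last m) a.castSucc) * v a) / s) ∈ dependentLocus K M := by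
  obtain ⟨a₀, ha₀⟩ := ne_iff.1 hv
  let N : Matrix (Fin (m + 1)) (Fin (j + 1)) K := fun b a =>
    if b ≠ Fin.last m ∧ a = a₀.castSucc then -p (M b (Fin.last j)) / v a₀ else 0
  obtain ⟨δ, hδ⟩ := exists_forall_apply_eq hM N
  refine ⟨δ, fun s hs => ?_⟩
  have h := update_mem_dependentLocus (p := p + s • δ) (v := v) hM hs fun b => ?_
  · simpa [hδ, N] using h
  · have hb : (b.castSucc : Fin (m + 1)) ≠ Fin.last m := (Fin.castSucc_lt_last b).ne
    have hj : Fin.last j ≠ a₀.castSucc := (Fin.castSucc_lt_last a₀).ne'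
    simp only [Pi.zero_apply] at ha₀
    simp only [Pi.add_apply, Pi.smul_apply, smul_eq_mul, hδ, N, add_mul, Finset.sum_add_distrib,
      hpv b, ne_eq, hb, not_false_eq_true, Fin.castSucc_inj, true_and, mul_ite, mul_zero, ite_mul,
      zero_mul, Finset.sum_ite_eq', Finset.mem_univ, ↓reduceIte, zero_add, hj, and_false, add_zero]
    field_simp
    ring

variable [Infinite K]

lemma coeff_mem_vanishingIdeal_dependentLocus (hM : Injective2 M) {F : (MvPolynomial τ k)[X]}
    {D : ℕ} (hD : F.natDegree ≤ D)
    (hF : ∀ d, F.coeff d ∈ supported k {M (Fin.last m) (Fin.last j)}ᶜ)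
    (hFM : F.eval (X (M (Fin.last m) (Fin.last j))) ∈ vanishingIdeal k (dependentLocus K M)) :
    F.coeff D ∈ vanishingIdeal k (dependentLocus K (M.submatrix Fin.castSucc Fin.castSucc)) := by
  classical
  intro p hp
  obtain ⟨v, hv, hpv⟩ := mem_dependentLocus.1 hp
  obtain ⟨a₀, ha₀⟩ := ne_iff.1 hv
  let β (q : τ → K) := -∑ a, q (M (Fin.last m) a.castSucc) * v a
  let δ : τ → K := Pi.single (M (Fin.last m) a₀.castSucc) 1
  have hβ : ∀ s, β (p + s • δ) = β p - s * v a₀ := fun s => by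
    simp only [β, δ, Pi.add_apply, Pi.smul_apply, Pi.single_apply, hM.eq_iff, Fin.castSucc_inj,
      true_and, smul_eq_mul, mul_ite, mul_one, mul_zero, add_mul, ite_mul, zero_mul,
      Finset.sum_add_distrib, Finset.sum_ite_eq', Finset.mem_univ, ↓reduceIte]
    ring
  refine aeval_eq_zero_of_line δ (β p / v a₀) fun s hs => ?_
  have hβs : β (p + s • δ) ≠ 0 := by
    rw [hβ, sub_ne_zero]
    exact fun h => hs (eq_div_of_mul_eq ha₀ h.symm)
  have hpsv : ∀ b : Fin m, ∑ a, (p + s • δ) (M b.castSucc a.castSucc) * v a = 0 := fun b => by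
    simpa [δ, Pi.single_apply, hM.eq_iff, (Fin.castSucc_lt_last _).ne] using hpv b
  obtain ⟨ε, hε⟩ := exists_line_update_mem_dependentLocus hM hv hpsv
  exact (mul_eq_zero.1 (aeval_coeff_mul_pow_eq_zero hD hF ε _ fun r hr =>
    hFM _ (hε r hr))).resolve_right (pow_ne_zero _ hβs)

lemma mem_vanishingIdeal_dependentLocus_submatrix_castSucc (hM : Injective2 M)
    {g : MvPolynomial τ k} (hg : g ∈ supported k {M (Fin.last m) (Fin.last j)}ᶜ)
    (hgM : g ∈ vanishingIdeal k (dependentLocus K M)) :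
    g ∈ vanishingIdeal k (dependentLocus K (M.submatrix Fin.castSucc id)) := by
  classical
  intro p hp
  obtain ⟨v, hv, hpv⟩ := mem_dependentLocus.1 hp
  simp only [submatrix_apply, id, Fin.sum_univ_castSucc] at hpv
  rcases eq_or_ne (v (Fin.last j)) 0 with hj | hj
  · have hv' : Fin.init v ≠ 0 := fun h => hv <| funext <| Fin.lastCases hj (congrFun h)
    obtain ⟨δ, hδ⟩ := exists_line_update_mem_dependentLocus hM (p := p) hv' fun b => by
      simpa [hj, Fin.init] using hpv b
    refine aeval_eq_zero_of_line δ 0 fun s hs => ?_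
    rw [← hgM _ (hδ s hs), aeval_update_of_mem_supported hg]
  · rw [← hgM _ (update_mem_dependentLocus hM hj hpv), aeval_update_of_mem_supported hg]

end CornerVariable

section MinorIdeal

variable {k K τ : Type*} [Field k] [Field K] [Algebra k K] [Infinite K] {m j : ℕ}
  {T : Set (MvPolynomial τ k)}

lemma span_inf_vanishingIdeal_le_of_submatrices {M : Matrix (Fin (m + 1)) (Fin (j + 1)) τ}
    (hM : Injective2 M) (hT : T ⊆ supported k {M (Fin.last m) (Fin.last j)}ᶜ)
    (hcorner : Ideal.span T ⊓
        vanishingIdeal k (dependentLocus K (M.submatrix Fin.castSucc Fin.castSucc)) ≤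
      Ideal.span T * minorIdeal k (M.submatrix Fin.castSucc Fin.castSucc))
    (hrow : Ideal.span T ⊓ vanishingIdeal k (dependentLocus K (M.submatrix Fin.castSucc id)) ≤
      Ideal.span T * minorIdeal k (M.submatrix Fin.castSucc id)) :
    Ideal.span T ⊓ vanishingIdeal k (dependentLocus K M) ≤ Ideal.span T * minorIdeal k M := by
  classical
  have hminors : maximalMinors k (M.submatrix Fin.castSucc Fin.castSucc) ⊆
      supported k {M (Fin.last m) (Fin.last j)}ᶜ :=
    maximalMinors_subset_supported fun b a h =>
      (Fin.castSucc_lt_last b).ne (hM.eq_iff.1 h).1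
  refine le_of_leadingCoeff_mem_span hT (Set.mul_subset_iff.2 fun f hf g hg =>
      mul_mem (hT hf) (hminors hg))
    (Ideal.mul_le_inf.trans (inf_le_inf_left _ (minorIdeal_le_vanishingIdeal M))) inf_le_left
    (fun D F hD hF hFT hFI => ?_) ?_ fun g hg hgI => ?_
  · rw [← Ideal.span_mul_span']
    exact hcorner ⟨hFT, coeff_mem_vanishingIdeal_dependentLocus hM hD hF hFI.2⟩
  · rintro _ ⟨f, hf, g, hg, rfl⟩
    obtain ⟨g', hg', hgg'⟩ := exists_mem_maximalMinors_sub_mul_mem_supported hM hg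
    refine Submodule.mem_sup.2 ⟨f * g', Ideal.mul_mem_mul (Ideal.subset_span hf)
      (Ideal.subset_span hg'), -((⟨_, hgg'⟩ : supported k _) • f),
      neg_mem (Submodule.smul_mem _ _ (Submodule.subset_span hf)), ?_⟩
    simp only [Subalgebra.smul_def, smul_eq_mul]
    ring
  · exact Ideal.mul_mono_right (minorIdeal_submatrix_castSucc_le M)
      (hrow ⟨hgI.1, mem_vanishingIdeal_dependentLocus_submatrix_castSucc hM hg hgI.2⟩)

lemma span_inf_vanishingIdeal_dependentLocus_le {M : Matrix (Fin m) (Fin j) τ}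
    (hM : Injective2 M) (hT : ∀ b a, T ⊆ supported k {M b a}ᶜ) :
    Ideal.span T ⊓ vanishingIdeal k (dependentLocus K M) ≤ Ideal.span T * minorIdeal k M := by
  induction m generalizing j with
  | zero =>
    cases j with
    | zero => simp [minorIdeal_eq_top]
    | succ j =>
      have hloc : dependentLocus K M = Set.univ :=
        Set.eq_univ_of_forall fun p => ⟨1, one_ne_zero, Subsingleton.elim _ _⟩
      simp [hloc, vanishingIdeal_univ]
  | succ m ih =>
    cases j with
    | zero => simp [minorIdeal_eq_top]
    | succ j =>
      exact span_inf_vanishingIdeal_le_of_submatrices hM (hT _ _)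
        (ih (injective2_submatrix hM (Fin.castSucc_injective _) (Fin.castSucc_injective _))
          fun _ _ => hT _ _)
        (ih (injective2_submatrix hM (Fin.castSucc_injective _) injective_id) fun _ _ => hT _ _)

variable (K) in
lemma minorIdeal_eq_vanishingIdeal {M : Matrix (Fin m) (Fin j) τ} (hM : Injective2 M) :
    minorIdeal k M = vanishingIdeal k (dependentLocus K M) := by
  refine (minorIdeal_le_vanishingIdeal M).antisymm ?_
  simpa using span_inf_vanishingIdeal_dependentLocus_le (T := {1}) hM fun b a =>
    Set.singleton_subset_iff.2 (one_mem _)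

lemma span_inf_minorIdeal_le {M : Matrix (Fin (m + 1)) (Fin (j + 1)) τ} (hM : Injective2 M)
    (hT : ∀ b a, (b = Fin.last m → a = Fin.last j) → T ⊆ supported k {M b a}ᶜ) :
    Ideal.span T ⊓ minorIdeal k M ≤ Ideal.span T * minorIdeal k M := by
  have hrow : ∀ b : Fin m, b.castSucc ≠ Fin.last m := fun b => (Fin.castSucc_lt_last b).ne
  refine (inf_le_inf_left _ (minorIdeal_le_vanishingIdeal (K := AlgebraicClosure k) M)).trans ?_
  exact span_inf_vanishingIdeal_le_of_submatrices hM (hT _ _ fun _ => rfl)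
    (span_inf_vanishingIdeal_dependentLocus_le
      (injective2_submatrix hM (Fin.castSucc_injective _) (Fin.castSucc_injective _))
      fun b _ => hT _ _ fun h => absurd h (hrow b))
    (span_inf_vanishingIdeal_dependentLocus_le
      (injective2_submatrix hM (Fin.castSucc_injective _) injective_id)
      fun b _ => hT _ _ fun h => absurd h (hrow b))

end MinorIdeal

section GraphIdeal

variable {k τ ι : Type*} [CommRing k]

/-- The ideal of the graph `z i = a i` over the affine space of the variables other than the
`z i`. -/
noncomputable def graphIdeal (z : ι → τ) (a : ι → MvPolynomial τ k) : Ideal (MvPolynomial τ k) :=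
  Ideal.span (Set.range fun i => X (z i) - a i)

lemma sub_aeval_mem_of_forall_X_sub_mem {J : Ideal (MvPolynomial τ k)} {φ : τ → MvPolynomial τ k}
    (hφ : ∀ u, X u - φ u ∈ J) (f : MvPolynomial τ k) : f - aeval φ f ∈ J := by
  rw [← Ideal.Quotient.mk_eq_mk_iff_sub_mem]
  have h : Ideal.Quotient.mkₐ k J = (Ideal.Quotient.mkₐ k J).comp (aeval φ) :=
    algHom_ext fun u => by
      simpa using (Ideal.Quotient.mk_eq_mk_iff_sub_mem _ _).2 (hφ u)
  exact DFunLike.congr_fun h f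

lemma graphIdeal_eq_vanishingIdeal {k τ ι : Type*} [Field k] (K : Type*) [Field K] [Algebra k K]
    [Infinite K] {z : ι → τ} (hz : Injective z) {a : ι → MvPolynomial τ k}
    (ha : ∀ i, a i ∈ supported k (Set.range z)ᶜ) :
    graphIdeal z a = vanishingIdeal k {p : τ → K | ∀ i, p (z i) = aeval p (a i)} := by
  refine le_antisymm (Ideal.span_le.2 ?_) fun f hf => ?_
  · rintro _ ⟨i, rfl⟩ p hp
    rw [map_sub, aeval_X, hp i, sub_self]
  let φ : τ → MvPolynomial τ k := extend z a X
  have hφ : ∀ u, X u - φ u ∈ graphIdeal z a := fun u => by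
    by_cases hu : ∃ i, z i = u
    · obtain ⟨i, rfl⟩ := hu
      simp only [φ, hz.extend_apply]
      exact Ideal.subset_span ⟨i, rfl⟩
    · simp [φ, extend_apply' _ _ _ hu]
  have hφf : aeval φ f ∈ vanishingIdeal k (Set.univ : Set (τ → K)) := fun p _ => by
    have hp : ∀ i, aeval (fun u => aeval p (φ u)) (a i) = aeval p (a i) := fun i =>
      aeval_congr_of_mem_supported (ha i) fun u hu => by simp [φ, extend_apply' _ _ _ hu]
    rw [← AlgHom.comp_apply, comp_aeval]
    exact hf _ fun i => by simp only [hp, φ, hz.extend_apply]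
  rw [vanishingIdeal_univ, Ideal.mem_bot] at hφf
  rw [← sub_zero f, ← hφf]
  exact sub_aeval_mem_of_forall_X_sub_mem hφ f

end GraphIdeal

section PencilIdeal

variable {k τ : Type*} [CommRing k] {m j : ℕ}

variable (k) in
/-- The polynomial `t * x a + z a`, where `x` and `z` are the first and the last row of the matrix
of variables `N`. -/
noncomputable def pencilForm (N : Matrix (Fin (m + 2)) (Fin j) τ) (t : τ) (a : Fin j) :
    MvPolynomial τ k :=
  X t * X (N 0 a) + X (N (Fin.last (m + 1)) a)

variable (k) in
/-- The ideal generated by the `pencilForm`s of the columns in `s`; the paper's `J_i^t` consists of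
those of the first `i` columns. -/
noncomputable def pencilIdeal (N : Matrix (Fin (m + 2)) (Fin j) τ) (t : τ) (s : Set (Fin j)) :
    Ideal (MvPolynomial τ k) :=
  Ideal.span (pencilForm k N t '' s)

variable {N : Matrix (Fin (m + 2)) (Fin j) τ} {t : τ} {s : Set (Fin j)}

lemma pencilIdeal_mono {s' : Set (Fin j)} (hs : s ⊆ s') :
    pencilIdeal k N t s ≤ pencilIdeal k N t s' :=
  Ideal.span_mono (Set.image_mono hs)

lemma pencilIdeal_eq_graphIdeal : pencilIdeal k N t s =
    graphIdeal (fun a : s => N (Fin.last (m + 1)) a) fun a => -(X t * X (N 0 a)) := by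
  rw [pencilIdeal, graphIdeal, Set.image_eq_range]
  exact congrArg (fun f => Ideal.span (Set.range f))
    (funext fun a => by rw [pencilForm, sub_neg_eq_add, add_comm])

end PencilIdeal

section PencilLocus

variable {k K τ : Type*} [Field k] [Field K] [Algebra k K] {m j : ℕ}

variable (K) in
/-- The points at which `t` times the first row of the matrix of variables `N` plus the last row
vanishes in the columns belonging to `s`. -/
def pencilLocus (N : Matrix (Fin (m + 2)) (Fin j) τ) (t : τ) (s : Set (Fin j)) : Set (τ → K) :=
  {p | ∀ a ∈ s, p (N (Fin.last (m + 1)) a) = -(p t * p (N 0 a))}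

variable (K) in
/-- The locus where `t` vanishes together with the last row of `N` in the columns belonging
to `s`. -/
def degenerateLocus (N : Matrix (Fin (m + 2)) (Fin j) τ) (t : τ) (s : Set (Fin j)) :
    Set (τ → K) :=
  {p | p t = 0 ∧ ∀ a ∈ s, p (N (Fin.last (m + 1)) a) = 0}

variable {N : Matrix (Fin (m + 2)) (Fin j) τ} {t : τ} {s : Set (Fin j)}

variable (K) in
lemma pencilIdeal_eq_vanishingIdeal [Infinite K] (hN : Injective2 N) (ht : ∀ b a, N b a ≠ t) :
    pencilIdeal k N t s = vanishingIdeal k (pencilLocus K N t s) := by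
  rw [pencilIdeal_eq_graphIdeal, graphIdeal_eq_vanishingIdeal K (injective_row_restrict hN _ _)
    fun a => ?_]
  · simp [pencilLocus]
  · refine neg_mem (mul_mem ?_ ?_) <;> refine X_mem_supported.2 ?_
    · rintro ⟨b, hb⟩
      exact ht _ _ hb
    · rintro ⟨b, hb⟩
      exact Fin.last_pos.ne' (hN hb).1

/-- A point of the degenerate locus is approached by points of the pencil, along a curve on which
the variable `N 0 ℓ` has a simple pole. -/
lemma exists_line_update_mem_pencilLocus [DecidableEq τ] (hN : Injective2 N)
    (ht : ∀ b a, N b a ≠ t) {ℓ : Fin j} {p : τ → K} (hp : p ∈ degenerateLocus K N t (s \ {ℓ})) :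
    ∃ δ : τ → K, ∀ r ≠ 0, update (p + r • δ) (N 0 ℓ) (-p (N (Fin.last (m + 1)) ℓ) / r) ∈
      pencilLocus K N t s := by
  obtain ⟨hpt, hps⟩ := hp
  obtain ⟨δ, hδ⟩ := exists_forall_apply_eq hN fun b a =>
    if b = Fin.last (m + 1) ∧ a ≠ ℓ then -p (N 0 a) else 0
  refine ⟨update δ t 1, fun r hr a ha => ?_⟩
  have h0 : (0 : Fin (m + 2)) ≠ Fin.last (m + 1) := Fin.last_pos.ne
  rcases eq_or_ne a ℓ with rfl | hℓ
  · simp only [ne_eq, hN.eq_iff, h0.symm, and_true, not_false_eq_true, update_of_ne, Pi.add_apply,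
      Pi.smul_apply, ht, hδ, not_true_eq_false, and_false, ↓reduceIte, smul_eq_mul, mul_zero,
      add_zero, (ht _ _).symm, hpt, update_self, mul_one, zero_add]
    field_simp
  · simp [hN.eq_iff, ht, (ht _ _).symm, hδ, hpt, h0, h0.symm, hℓ, hps a ⟨ha, hℓ⟩]

lemma coeff_mem_vanishingIdeal_degenerateLocus [Infinite K] (hN : Injective2 N)
    (ht : ∀ b a, N b a ≠ t) {ℓ : Fin j} {F : (MvPolynomial τ k)[X]} {D : ℕ}
    (hD : F.natDegree ≤ D) (hF : ∀ d, F.coeff d ∈ supported k {N 0 ℓ}ᶜ)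
    (hFs : F.eval (X (N 0 ℓ)) ∈ pencilIdeal k N t s) :
    F.coeff D ∈ vanishingIdeal k (degenerateLocus K N t (s \ {ℓ})) := by
  classical
  rw [pencilIdeal_eq_vanishingIdeal K hN ht] at hFs
  rintro p ⟨hpt, hps⟩
  let δ : τ → K := Pi.single (N (Fin.last (m + 1)) ℓ) 1
  refine aeval_eq_zero_of_line δ (-p (N (Fin.last (m + 1)) ℓ)) fun r hr => ?_
  have hz : -(p + r • δ) (N (Fin.last (m + 1)) ℓ) ≠ 0 := by
    simp only [Pi.add_apply, Pi.smul_apply, δ, Pi.single_eq_same, smul_eq_mul, mul_one]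
    exact fun h => hr (by linear_combination -h)
  have hp : p + r • δ ∈ degenerateLocus K N t (s \ {ℓ}) :=
    ⟨by simp [δ, hpt, (ht _ _).symm], fun a ha => by
      simp [δ, hps a ha, hN.eq_iff, mt Set.mem_singleton_iff.2 ha.2]⟩
  obtain ⟨ε, hε⟩ := exists_line_update_mem_pencilLocus hN ht hp
  exact (mul_eq_zero.1 (aeval_coeff_mul_pow_eq_zero hD hF ε _ fun c hc =>
    hFs _ (hε c hc))).resolve_right (pow_ne_zero _ hz)

lemma mem_pencilIdeal_diff_singleton (hN : Injective2 N) (ht : ∀ b a, N b a ≠ t) {ℓ : Fin j}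
    {g : MvPolynomial τ k} (hg : g ∈ supported k {N 0 ℓ}ᶜ) (hgs : g ∈ pencilIdeal k N t s) :
    g ∈ pencilIdeal k N t (s \ {ℓ}) := by
  classical
  rw [pencilIdeal_eq_vanishingIdeal (AlgebraicClosure k) hN ht]
  intro p hp
  rcases eq_or_ne (p t) 0 with hpt | hpt
  · have hC : ∀ d, (Polynomial.C g).coeff d ∈ supported k {N 0 ℓ}ᶜ := fun d => by
      rw [Polynomial.coeff_C]
      split_ifs
      exacts [hg, zero_mem _]
    have h := coeff_mem_vanishingIdeal_degenerateLocus (K := AlgebraicClosure k) hN ht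
      (Polynomial.natDegree_C g).le hC (by rwa [Polynomial.eval_C])
    rw [Polynomial.coeff_C_zero] at h
    exact h p ⟨hpt, fun a ha => by simpa [hpt] using hp a ha⟩
  · rw [pencilIdeal_eq_vanishingIdeal (AlgebraicClosure k) hN ht] at hgs
    rw [← aeval_update_of_mem_supported hg p (-p (N (Fin.last (m + 1)) ℓ) / p t)]
    refine hgs _ fun a ha => ?_
    rcases eq_or_ne a ℓ with rfl | hℓ
    · simp only [ne_eq, hN.eq_iff, Fin.last_pos.ne', and_true, not_false_eq_true, update_of_ne,
        (ht _ _).symm, update_self]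
      field_simp
    · simpa [hN.eq_iff, (ht _ _).symm, Fin.last_pos.ne', hℓ] using hp a ⟨ha, hℓ⟩

end PencilLocus

section PencilProduct

variable {k K τ : Type*} [Field k] [Field K] [Algebra k K] {m j : ℕ}

lemma graphIdeal_inf_minorIdeal_le {M : Matrix (Fin (m + 1)) (Fin (j + 1)) τ} (hM : Injective2 M)
    {s : Set (Fin (j + 1))} (hs : Fin.last j ∉ s) {a : s → MvPolynomial τ k}
    (ha : ∀ i b c, (b = Fin.last m → c = Fin.last j) → a i ∈ supported k {M b c}ᶜ) :
    graphIdeal (fun i : s => M (Fin.last m) i) a ⊓ minorIdeal k M ≤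
      graphIdeal (fun i : s => M (Fin.last m) i) a * minorIdeal k M := by
  refine span_inf_minorIdeal_le hM fun b c hbc => ?_
  rintro _ ⟨i, rfl⟩
  refine sub_mem (X_mem_supported.2 fun h => hs ?_) (ha i b c hbc)
  obtain ⟨hb, hc⟩ := hM h
  exact hbc hb.symm ▸ hc ▸ i.2

variable {N : Matrix (Fin (m + 2)) (Fin (j + 1)) τ} {t : τ} {s : Set (Fin (j + 1))}

lemma pencilIdeal_inf_minorIdeal_le_of_last_notMem (hN : Injective2 N) (ht : ∀ b a, N b a ≠ t)
    (hs : Fin.last j ∉ s) :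
    pencilIdeal k N t s ⊓ minorIdeal k (N.submatrix Fin.succ id) ≤
      pencilIdeal k N t s * minorIdeal k (N.submatrix Fin.succ id) := by
  rw [pencilIdeal_eq_graphIdeal]
  refine graphIdeal_inf_minorIdeal_le
    (injective2_submatrix hN (Fin.succ_injective _) injective_id) hs fun i b c _ => neg_mem
      (mul_mem (X_mem_supported.2 (ht _ _).symm) (X_mem_supported.2 fun h => ?_))
  exact (Fin.succ_ne_zero b) (hN h).1.symm

/-- Since the minors do not involve `t`, splitting off the part divisible by `t` reduces to the
ideal of the graph `z a = 0`. -/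
lemma vanishingIdeal_degenerateLocus_inf_minorIdeal_le [Infinite K] (hN : Injective2 N)
    (ht : ∀ b a, N b a ≠ t) (hs : Fin.last j ∉ s) :
    vanishingIdeal k (degenerateLocus K N t s) ⊓ minorIdeal k (N.submatrix Fin.succ id) ≤
      (Ideal.span {X t} ⊔ pencilIdeal k N t s) * minorIdeal k (N.submatrix Fin.succ id) := by
  classical
  rintro f ⟨hfE, hfM⟩
  let L := minorIdeal k (N.submatrix Fin.succ id)
  have hminors : maximalMinors k (N.submatrix Fin.succ id) ⊆ supported k {t}ᶜ :=
    maximalMinors_subset_supported fun b a => ht _ _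
  obtain ⟨F, hF, rfl⟩ := exists_coeff_mem_span_of_mem_ideal_span (S := supported k {t}ᶜ)
    (aeval_X_surjective_of_supported_compl t) hfM
  have hFL : ∀ d, F.coeff d ∈ L := fun d => Submodule.span_subset_span _ _ _ (hF d)
  have hdiff : F.eval (X t) - F.coeff 0 ∈ Ideal.span {X t} * L := eval_sub_coeff_zero_mem hFL
  have hZ : F.coeff 0 ∈ graphIdeal (fun a : s => N (Fin.last (m + 1)) a) fun _ => 0 := by
    rw [graphIdeal_eq_vanishingIdeal K (injective_row_restrict hN _ _) fun _ => zero_mem _]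
    intro p hp
    have hpE : update p t 0 ∈ degenerateLocus K N t s :=
      ⟨update_self .., fun a ha => by simpa [ht] using hp ⟨a, ha⟩⟩
    rw [← aeval_update_of_mem_supported (span_supported_le hminors (hF 0)) p 0,
      ← aeval_eval_X_of_eq_zero F (update_self t 0 p)]
    exact hfE _ hpE
  have hZL := graphIdeal_inf_minorIdeal_le
    (injective2_submatrix hN (Fin.succ_injective _) injective_id) hs
    (fun _ _ _ _ => zero_mem _) ⟨hZ, hFL 0⟩
  have hZt : graphIdeal (fun a : s => N (Fin.last (m + 1)) a) (fun _ => 0) ≤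
      Ideal.span {X t} ⊔ pencilIdeal k N t s := by
    refine Ideal.span_le.2 ?_
    rintro _ ⟨a, rfl⟩
    exact Submodule.mem_sup.2 ⟨-(X t * X (N 0 a)), neg_mem (Ideal.mul_mem_right _ _
      (Ideal.mem_span_singleton_self _)), _, Ideal.subset_span ⟨a, a.2, rfl⟩,
      by rw [pencilForm]; ring⟩
  rw [← sub_add_cancel (F.eval (X t)) (F.coeff 0)]
  exact add_mem (Ideal.mul_mono_left le_sup_left hdiff) (Ideal.mul_mono_left hZt hZL)

lemma mul_X_mem_of_mem_insert_mul_maximalMinors (hN : Injective2 N)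
    (hs : Fin.last j ∈ s) {g : MvPolynomial τ k}
    (hg : g ∈ insert (X t) (pencilForm k N t '' (s \ {Fin.last j})) *
      maximalMinors k (N.submatrix Fin.succ id)) :
    g * X (N 0 (Fin.last j)) ∈
      (pencilIdeal k N t s * minorIdeal k (N.submatrix Fin.succ id)).restrictScalars
          (supported k {N 0 (Fin.last j)}ᶜ) ⊔
        Submodule.span (supported k {N 0 (Fin.last j)}ᶜ)
          (maximalMinors k (N.submatrix Fin.succ id)) := by
  obtain ⟨f, hf, f', hf', rfl⟩ := hg
  rcases hf with rfl | ⟨a, ha, rfl⟩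
  · let z : supported k {N 0 (Fin.last j)}ᶜ :=
      ⟨X (N (Fin.last (m + 1)) (Fin.last j)), X_mem_supported.2 fun h =>
        Fin.last_pos.ne' (hN h).1⟩
    refine Submodule.mem_sup.2 ⟨pencilForm k N t (Fin.last j) * f', Ideal.mul_mem_mul
      (Ideal.subset_span ⟨_, hs, rfl⟩) (Ideal.subset_span hf'), -(z • f'),
      neg_mem (Submodule.smul_mem _ _ (Submodule.subset_span hf')), ?_⟩
    simp only [z, Subalgebra.smul_def, smul_eq_mul, pencilForm]
    ring
  · exact Submodule.mem_sup_left (Ideal.mul_mem_right _ _ (Ideal.mul_mem_mul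
      (Ideal.subset_span ⟨a, ha.1, rfl⟩) (Ideal.subset_span hf')))

lemma insert_pencilForm_subset_supported (hN : Injective2 N) (ht : ∀ b a, N b a ≠ t)
    (ℓ : Fin (j + 1)) : insert (X t) (pencilForm k N t '' (s \ {ℓ})) ⊆
    (supported k {N 0 ℓ}ᶜ : Set (MvPolynomial τ k)) := by
  have hX : ∀ {b a}, (b = 0 → a ≠ ℓ) → (X (N b a) : MvPolynomial τ k) ∈ supported k {N 0 ℓ}ᶜ :=
    fun hba => X_mem_supported.2 fun h => hba (hN h).1 (hN h).2
  have hXt : (X t : MvPolynomial τ k) ∈ supported k {N 0 ℓ}ᶜ := X_mem_supported.2 (ht _ _).symm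
  refine Set.insert_subset hXt ?_
  rintro _ ⟨a, ha, rfl⟩
  exact add_mem (mul_mem hXt (hX fun _ => ha.2)) (hX fun h => absurd h Fin.last_pos.ne')

lemma pencilIdeal_inf_minorIdeal_le (hN : Injective2 N) (ht : ∀ b a, N b a ≠ t) :
    pencilIdeal k N t s ⊓ minorIdeal k (N.submatrix Fin.succ id) ≤
      pencilIdeal k N t s * minorIdeal k (N.submatrix Fin.succ id) := by
  by_cases hs : Fin.last j ∈ s
  swap
  · exact pencilIdeal_inf_minorIdeal_le_of_last_notMem hN ht hs
  have hs' : Fin.last j ∉ s \ {Fin.last j} := fun h => h.2 rfl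
  have hminors : maximalMinors k (N.submatrix Fin.succ id) ⊆
      supported k {N 0 (Fin.last j)}ᶜ :=
    maximalMinors_subset_supported fun b a h => Fin.succ_ne_zero b (hN h).1
  refine le_of_leadingCoeff_mem_span hminors
    (G := insert (X t) (pencilForm k N t '' (s \ {Fin.last j})) *
      maximalMinors k (N.submatrix Fin.succ id))
    (Set.mul_subset_iff.2 fun f hf g hg =>
      mul_mem (insert_pencilForm_subset_supported hN ht _ hf) (hminors hg))
    Ideal.mul_le_inf inf_le_right (fun D F hD hF hFM hFI => ?_)
    (fun g hg => mul_X_mem_of_mem_insert_mul_maximalMinors hN hs hg) fun g hg hgI => ?_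
  · rw [← Ideal.span_mul_span', Ideal.span_insert]
    exact vanishingIdeal_degenerateLocus_inf_minorIdeal_le (K := AlgebraicClosure k) hN ht hs'
      ⟨coeff_mem_vanishingIdeal_degenerateLocus hN ht hD hF hFI.1, hFM⟩
  · exact Ideal.mul_mono_left (pencilIdeal_mono Set.sdiff_subset)
      (pencilIdeal_inf_minorIdeal_le_of_last_notMem hN ht hs'
        ⟨mem_pencilIdeal_diff_singleton hN ht hg hgI.1, hgI.2⟩)

end PencilProduct

theorem Jt_mul_Kt_isRadical_general {k τ : Type*} [Field k] {m j : ℕ}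
    {N : Matrix (Fin (m + 2)) (Fin j) τ} {t : τ} (hN : Injective2 N) (ht : ∀ b a, N b a ≠ t)
    (s : Set (Fin j)) :
    (pencilIdeal k N t s * minorIdeal k (N.submatrix Fin.succ id)).IsRadical ∧
      pencilIdeal k N t s * minorIdeal k (N.submatrix Fin.succ id) =
        pencilIdeal k N t s ⊓ minorIdeal k (N.submatrix Fin.succ id) := by
  have hmul : pencilIdeal k N t s * minorIdeal k (N.submatrix Fin.succ id) =
      pencilIdeal k N t s ⊓ minorIdeal k (N.submatrix Fin.succ id) := by
    cases j with
    | zero => rw [minorIdeal_eq_top, Ideal.mul_top, inf_top_eq]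
    | succ j => exact Ideal.mul_le_inf.antisymm (pencilIdeal_inf_minorIdeal_le hN ht)
  refine ⟨?_, hmul⟩
  rw [hmul, pencilIdeal_eq_vanishingIdeal (AlgebraicClosure k) hN ht,
    minorIdeal_eq_vanishingIdeal (AlgebraicClosure k)
      (injective2_submatrix hN (Fin.succ_injective _) injective_id)]
  exact (vanishingIdeal_isRadical _).inf (vanishingIdeal_isRadical _)

/-- The first `j` columns of the generic matrix, with the index `none` reserved for `t`. -/
def firstColumns {n j : ℕ} (hj : j ≤ n) : Matrix (Fin n) (Fin j) (Option (Fin n × Fin n)) :=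
  of fun b a => some (b, Fin.castLE hj a)

lemma injective2_firstColumns {n j : ℕ} (hj : j ≤ n) : Injective2 (firstColumns hj) :=
  fun _ _ _ _ h => by simpa [firstColumns] using h

lemma Jt_eq_pencilIdeal {m i j : ℕ} (hij : i ≤ j) (hj : j ≤ m + 2) :
    Jt (m + 2) i = pencilIdeal ℂ (firstColumns hj) none {a | (a : ℕ) < i} := by
  refine congrArg Ideal.span (Set.ext fun f => ⟨?_, ?_⟩)
  · rintro ⟨a, ha, rfl⟩
    exact ⟨⟨a, ha.trans_le hij⟩, ha, rfl⟩
  · rintro ⟨a, ha, rfl⟩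
    exact ⟨Fin.castLE hj a, ha, rfl⟩

lemma Kt_eq_minorIdeal {m j : ℕ} (hj : j ≤ m + 2) :
    Kt (m + 2) j = minorIdeal ℂ ((firstColumns hj).submatrix Fin.succ id) := by
  have hmod : ∀ b : Fin j, (b : ℕ) % (m + 2) = b := fun b => Nat.mod_eq_of_lt (b.2.trans_le hj)
  refine congrArg Ideal.span (Set.ext fun f => ⟨?_, ?_⟩)
  · rintro ⟨B, hB, hB0, rfl⟩
    have hB0' : ∀ b, B b ≠ 0 := fun b => Fin.pos_iff_ne_zero.1 (hB0 b)
    refine ⟨fun b => (B b).pred (hB0' b), fun b c hbc => Fin.pred_lt_pred_iff.2 (hB hbc), ?_⟩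
    congr 1
    ext1 b a
    simp [firstColumns, zz, hmod, Fin.ext_iff]
  · rintro ⟨B, hB, rfl⟩
    refine ⟨Fin.succ ∘ B, (Fin.strictMono_succ).comp hB, fun b => Nat.succ_pos _, ?_⟩
    congr 1
    ext1 b a
    simp [firstColumns, zz, hmod, Fin.ext_iff]

/-- For all `1 ≤ i ≤ j ≤ n`, the product ideal `J_i^t · K_j` of
`ℂ[t, z_{11}, …, z_{nn}]` is radical; consequently `J_i^t · K_j = J_i^t ∩ K_j`. -/
theorem Jt_mul_Kt_isRadical (n : ℕ) [NeZero n] (hn : 2 ≤ n) (i j : ℕ)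
    (hi : 1 ≤ i) (hij : i ≤ j) (hj : j ≤ n) :
    (Jt n i * Kt n j).IsRadical ∧ Jt n i * Kt n j = Jt n i ⊓ Kt n j := by
  obtain ⟨m, rfl⟩ := Nat.exists_eq_add_of_le' hn
  rw [Jt_eq_pencilIdeal hij hj, Kt_eq_minorIdeal hj]
  exact Jt_mul_Kt_isRadical_general (injective2_firstColumns hj)
    (fun _ _ => Option.some_ne_none _) _
end

section
/- In C[z_{11}, ..., z_{nn}], for all 1 ≤ i < j ≤ n, the product ideal J_i^0 · K_j equals the intersection J_i^0 ∩ K_j, where J_i^0 = ⟨z_{n1}, ..., z_{ni}⟩ and K_j is generated by the j×j minors p_B for B ⊆ {2,...,n}, |B| = j. -/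
/-!
Weight the variable in row `r` and column `c` by `r * c`. By the rearrangement inequality the
diagonal term then strictly dominates every other term of a maximal minor. Expanding determinants
with a repeated column rewrites every product of a monomial and a minor as a combination of standard
products, whose diagonal terms are pairwise distinct. If such a combination lies in an ideal
generated by variables, then, provided these variables occur in no diagonal term, each standard
product in it must already have its monomial factor in that ideal. The variables
`z_{n1}, …, z_{n,j-1}` occur in no diagonal term because `B` is increasing: only its last row can be
row `n`.
-/

open MvPolynomial

/-- The variable `z_{ij}` in `ℂ[z_{ij} : 1 ≤ i, j ≤ n]` (`0`-based indexing). -/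
noncomputable def z0 (n : ℕ) (i j : Fin n) : MvPolynomial (Fin n × Fin n) ℂ := X (i, j)

/-- The ideal `J_i^0 = ⟨z_{n1}, …, z_{ni}⟩`. -/
noncomputable def J0 (n : ℕ) [NeZero n] (i : ℕ) : Ideal (MvPolynomial (Fin n × Fin n) ℂ) :=
  Ideal.span {f | ∃ k : Fin n, (k : ℕ) < i ∧ f = z0 n (rowN n) k}

/-- The ideal `K_j`, generated by the `j × j` minors `p_B` of `(z_{kℓ})` with row set
`B ⊆ {2, …, n}`, `|B| = j`, and columns `1, …, j` (for `j ≤ n` the column index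
`b % n` is just `b`; `K_n = 0` since no admissible `B` exists). -/
noncomputable def K0 (n : ℕ) [NeZero n] (j : ℕ) : Ideal (MvPolynomial (Fin n × Fin n) ℂ) :=
  Ideal.span {f | ∃ B : Fin j → Fin n, StrictMono B ∧ (∀ a, 1 ≤ (B a : ℕ)) ∧
    f = Matrix.det (Matrix.of fun a b : Fin j =>
      z0 n (B a) ⟨(b : ℕ) % n, Nat.mod_lt _ (Nat.pos_of_ne_zero (NeZero.ne n))⟩)}

section Dominance

variable {σ R Γ : Type*} [CommSemiring R] [AddCommMonoid Γ] [LinearOrder Γ]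

/-- The monomial `d` plays the role of a monic leading monomial of `p`: it has coefficient `1`, and
every other monomial of `p` has smaller weight. The weight need not separate monomials, so it is not
a monomial order. -/
def HasDominantExponent (w : (σ →₀ ℕ) →+ Γ) (p : MvPolynomial σ R) (d : σ →₀ ℕ) : Prop :=
  coeff d p = 1 ∧ ∀ e ∈ p.support, e ≠ d → w e < w d

theorem HasDominantExponent.monomial_mul [IsOrderedCancelAddMonoid Γ] {w : (σ →₀ ℕ) →+ Γ}
    {p : MvPolynomial σ R} {d : σ →₀ ℕ} (h : HasDominantExponent w p d) (u : σ →₀ ℕ) :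
    HasDominantExponent w (monomial u 1 * p) (u + d) := by
  refine ⟨by rw [coeff_monomial_mul, h.1, one_mul], fun e he hne => ?_⟩
  rw [mem_support_iff, coeff_monomial_mul'] at he
  obtain ⟨hue, he⟩ := ite_ne_right_iff.1 he
  obtain ⟨e, rfl⟩ := exists_add_of_le hue
  rw [add_tsub_cancel_left, one_mul] at he
  rw [map_add, map_add]
  exact add_lt_add_right (h.2 e (mem_support_iff.2 he) fun hed => hne (by rw [hed])) _

theorem eq_zero_of_linearCombination_mem_span_X_image {ι : Type*} {w : (σ →₀ ℕ) →+ Γ}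
    {v : ι → MvPolynomial σ R} {d : ι → σ →₀ ℕ} (hv : ∀ q, HasDominantExponent w (v q) (d q))
    (hd : Function.Injective d) {T : Set σ} {t : ι →₀ R}
    (hT : ∀ q ∈ t.support, ∀ s ∈ T, d q s = 0)
    (ht : Finsupp.linearCombination R v t ∈ Ideal.span (X '' T)) : t = 0 := by
  by_contra hne
  obtain ⟨q₀, hq₀, hmax⟩ :=
    t.support.exists_max_image (fun q => w (d q)) (Finsupp.support_nonempty_iff.2 hne)
  have hcoeff : coeff (d q₀) (Finsupp.linearCombination R v t) = t q₀ := by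
    rw [Finsupp.linearCombination_apply, Finsupp.sum, coeff_sum, Finset.sum_eq_single_of_mem q₀ hq₀]
    · rw [coeff_smul, (hv q₀).1, smul_eq_mul, mul_one]
    · intro q hq hqq₀
      rw [coeff_smul, notMem_support_iff.1, smul_zero]
      exact fun hmem => (hmax q hq).not_gt ((hv q).2 _ hmem (hd.ne hqq₀.symm))
  obtain ⟨s, hs, hne⟩ := mem_ideal_span_X_image.1 ht (d q₀)
    (mem_support_iff.2 (hcoeff ▸ Finsupp.mem_support_iff.1 hq₀))
  exact hne (hT q₀ hq₀ s hs)

end Dominance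

theorem monomial_mem_span_X_image {σ R : Type*} [CommSemiring R] {T : Set σ} {u : σ →₀ ℕ} {s : σ}
    (hs : s ∈ T) (hu : u s ≠ 0) (r : R) : monomial u r ∈ Ideal.span (X '' T) :=
  Ideal.mem_of_dvd _ (X_dvd_monomial.2 (Or.inr hu)) (Ideal.subset_span ⟨s, hs, rfl⟩)

theorem span_X_image_mul_eq_inf {σ R Γ ι : Type*} [CommRing R] [AddCommMonoid Γ] [LinearOrder Γ]
    [IsOrderedCancelAddMonoid Γ] {w : (σ →₀ ℕ) →+ Γ} {T : Set σ} {K : Ideal (MvPolynomial σ R)}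
    {u d : ι → σ →₀ ℕ} {g : ι → MvPolynomial σ R} (hgK : ∀ q, g q ∈ K)
    (hspan : K.restrictScalars R ≤ Submodule.span R (Set.range fun q => monomial (u q) 1 * g q))
    (hg : ∀ q, HasDominantExponent w (g q) (d q))
    (hinj : Function.Injective fun q => u q + d q) (hT : ∀ q, ∀ s ∈ T, d q s = 0) :
    Ideal.span (X '' T) * K = Ideal.span (X '' T) ⊓ K := by
  classical
  refine le_antisymm Ideal.mul_le_inf ?_
  rintro f ⟨hfJ, hfK⟩
  let v : ι → MvPolynomial σ R := fun q => monomial (u q) 1 * g q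
  let hits : ι → Prop := fun q => ∃ s ∈ T, u q s ≠ 0
  obtain ⟨t, rfl⟩ := (Finsupp.mem_span_range_iff_exists_finsupp (v := v)).1 (hspan hfK)
  change Finsupp.linearCombination R v t ∈ Ideal.span (X '' T) at hfJ
  change Finsupp.linearCombination R v t ∈ _
  have hhits : Finsupp.linearCombination R v (t.filter hits) ∈ Ideal.span (X '' T) * K := by
    refine Ideal.sum_mem _ fun q hq => ?_
    rw [Finsupp.support_filter, Finset.mem_filter] at hq
    obtain ⟨s, hs, hus⟩ := hq.2
    exact Submodule.smul_of_tower_mem _ _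
      (Ideal.mul_mem_mul (monomial_mem_span_X_image hs hus 1) (hgK q))
  have hsplit := Finsupp.filter_add_filter_not t hits
  have hmiss : t.filter (fun q => ¬hits q) = 0 := by
    refine eq_zero_of_linearCombination_mem_span_X_image (fun q => (hg q).monomial_mul (u q)) hinj
      (T := T) (fun q hq s hs => ?_) ?_
    · rw [Finsupp.support_filter, Finset.mem_filter] at hq
      have hus : u q s = 0 := by_contra fun hus => hq.2 ⟨s, hs, hus⟩
      rw [Finsupp.add_apply, hus, hT q s hs]
    · rw [← hsplit, map_add] at hfJ
      exact (Submodule.add_mem_iff_right _ (Ideal.mul_le_left hhits)).1 hfJ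
  rwa [← hsplit, hmiss, add_zero]

open scoped Pointwise in
theorem restrictScalars_span_eq_span_monomial_mul {σ R : Type*} [CommSemiring R]
    (G : Set (MvPolynomial σ R)) :
    (Ideal.span G).restrictScalars R =
      Submodule.span R (Set.range (fun u : σ →₀ ℕ => monomial u (1 : R)) • G) := by
  refine (Submodule.span_smul_of_span_eq_top ?_ G).symm
  rw [← coe_basisMonomials]
  exact (basisMonomials σ R).span_eq

theorem sum_comp_perm_mul_lt_sum_mul {α : Type*} [Semiring α] [LinearOrder α]
    [IsStrictOrderedRing α] [ExistsAddOfLE α] {n : ℕ} {f g : Fin n → α} (hf : StrictMono f)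
    (hg : StrictMono g) {τ : Equiv.Perm (Fin n)} (hτ : τ ≠ 1) :
    ∑ a, f (τ a) * g a < ∑ a, f a * g a := by
  have hfg : Monovary f g := fun a b hab => hf.monotone (hg.lt_iff_lt.1 hab).le
  refine hfg.sum_comp_perm_mul_lt_sum_mul_iff.2 fun h => hτ ((Equiv.Perm.monotone_iff τ).1 ?_)
  exact monotone_iff_forall_lt.2 fun a b hab => hf.le_iff_le.1 (h (hg hab))

theorem sum_mul_det_submatrix_succAbove_eq_zero {R : Type*} [CommRing R] {j : ℕ}
    (N : Matrix (Fin (j + 1)) (Fin j) R) (k : Fin j) :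
    ∑ l : Fin (j + 1), (-1) ^ (l : ℕ) * N l k * (N.submatrix l.succAbove id).det = 0 := by
  let N' : Matrix (Fin (j + 1)) (Fin (j + 1)) R := Matrix.of fun l => Fin.cons (N l k) (N l)
  have hdet : N'.det = 0 :=
    Matrix.det_zero_of_column_eq (Fin.succ_ne_zero k).symm fun l => by simp [N']
  rw [← hdet, Matrix.det_succ_column_zero]
  rfl

theorem exists_orderEmbedding_insert {α : Type*} [LinearOrder α] {j : ℕ} {B : Fin j ↪o α}
    {k : Fin j} {r : α} (hr : r < B k) (hlt : ∀ a < k, B a < r) :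
    ∃ A : Fin (j + 1) ↪o α,
      A k.castSucc = r ∧ (Fin.succAboveOrderEmb k.castSucc).trans A = B := by
  have hA : StrictMono (Fin.insertNth k.castSucc r B : Fin (j + 1) → α) :=
    (Fin.strictMono_insertNth_iff _ _ _).2 ⟨B.strictMono, hlt,
      fun a ha => hr.trans_le (B.monotone (Fin.castSucc_le_castSucc_iff.1 ha))⟩
  exact ⟨OrderEmbedding.ofStrictMono _ hA, by simp, by ext a; simp⟩

section MaximalMinors

variable {σ : Type*} {m j : ℕ} (R : Type*) [CommRing R] (x : Fin m × Fin j ↪ σ)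

/-- The maximal minor on the rows `B` of the `m × j` matrix whose entries are the distinct
indeterminates `x (a, b)`; the ring may contain further indeterminates. -/
noncomputable def maximalMinor (B : Fin j ↪o Fin m) : MvPolynomial σ R :=
  Matrix.det (Matrix.of fun a b : Fin j => X (x (B a, b)))

/-- The ideal of maximal minors of the matrix of indeterminates `x`. -/
noncomputable def maximalMinorIdeal : Ideal (MvPolynomial σ R) :=
  Ideal.span (Set.range (maximalMinor R x))

/-- The exponent of the monomial `∏ a, x (B (τ a), a)`, indexed by `τ` in the Leibniz expansion of
`maximalMinor R x B`; `τ = 1` gives the diagonal term. -/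
noncomputable def termExponent (B : Fin j ↪o Fin m) (τ : Equiv.Perm (Fin j)) : σ →₀ ℕ :=
  ∑ a, Finsupp.single (x (B (τ a), a)) 1

/-- The weight on exponents for which `x (r, c)` has weight `r * c` and all indeterminates outside
the matrix have weight `0`; it makes the diagonal term of a maximal minor dominant. -/
noncomputable def diagonalWeight : (σ →₀ ℕ) →+ ℕ :=
  Finsupp.weight (Function.extend x (fun p => (p.1 : ℕ) * p.2) 0)

theorem diagonalWeight_single (r : Fin m) (c : Fin j) :
    diagonalWeight x (Finsupp.single (x (r, c)) 1) = r * c := by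
  simp [diagonalWeight, Finsupp.weight_single, x.injective.extend_apply]

theorem diagonalWeight_termExponent (B : Fin j ↪o Fin m) (τ : Equiv.Perm (Fin j)) :
    diagonalWeight x (termExponent x B τ) = ∑ a, (B (τ a) : ℕ) * a := by
  simp only [termExponent, map_sum, diagonalWeight_single]

theorem diagonalWeight_termExponent_lt (B : Fin j ↪o Fin m) {τ : Equiv.Perm (Fin j)}
    (hτ : τ ≠ 1) :
    diagonalWeight x (termExponent x B τ) < diagonalWeight x (termExponent x B 1) := by
  rw [diagonalWeight_termExponent, diagonalWeight_termExponent]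
  exact sum_comp_perm_mul_lt_sum_mul (f := fun a => (B a : ℕ)) B.strictMono Fin.val_strictMono hτ

theorem termExponent_one_apply (B : Fin j ↪o Fin m) (r : Fin m) (k : Fin j) :
    termExponent x B 1 (x (r, k)) = if B k = r then 1 else 0 := by
  rw [termExponent, Finsupp.finsetSum_apply, Finset.sum_eq_single k]
  · classical simp [Finsupp.single_apply]
  · intro a _ ha
    simp [ha]
  · simp

theorem maximalMinor_eq_sum_monomial (B : Fin j ↪o Fin m) :
    maximalMinor R x B =
      ∑ τ, monomial (termExponent x B τ) (((Equiv.Perm.sign τ : ℤ) : R)) := by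
  rw [maximalMinor, Matrix.det_apply']
  refine Finset.sum_congr rfl fun τ _ => ?_
  rw [← map_intCast (C : R →+* MvPolynomial σ R), ← mul_one ((_ : ℤ) : R), ← C_mul_monomial,
    termExponent, monomial_sum_one, mul_one]
  rfl

theorem hasDominantExponent_maximalMinor (B : Fin j ↪o Fin m) :
    HasDominantExponent (diagonalWeight x) (maximalMinor R x B) (termExponent x B 1) := by
  classical
  rw [maximalMinor_eq_sum_monomial]
  constructor
  · rw [coeff_sum, Finset.sum_eq_single_of_mem 1 (Finset.mem_univ 1)]
    · simp
    · intro τ _ hτ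
      rw [coeff_monomial, if_neg]
      exact ne_of_apply_ne (diagonalWeight x) (diagonalWeight_termExponent_lt x B hτ).ne
  · intro e he hne
    obtain ⟨τ, -, hτ⟩ := Finset.mem_biUnion.1 (support_sum he)
    obtain rfl := Finset.mem_singleton.1 (support_monomial_subset hτ)
    exact diagonalWeight_termExponent_lt x B (ne_of_apply_ne (termExponent x B) hne)

/-- The product of the monomial with exponent `u` and the minor on rows `B` is standard if no row
`B k` can be lowered to a row `r` with `x (r, k) ∣ x ^ u` while keeping `B` increasing up to
position `k`; equivalently, `B` is the lexicographically least row set whose diagonal term divides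
`x ^ u * ∏ a, x (B a, a)`. -/
def IsStandard (u : σ →₀ ℕ) (B : Fin j ↪o Fin m) : Prop :=
  ∀ (k : Fin j) (r : Fin m), r < B k → (∀ a < k, B a < r) → u (x (r, k)) = 0

variable {x}

theorem IsStandard.not_lt_of_eq_below {u u' : σ →₀ ℕ} {B B' : Fin j ↪o Fin m}
    (hstd : IsStandard x u B) (h : u + termExponent x B 1 = u' + termExponent x B' 1) {k : Fin j}
    (hk : ∀ a < k, B a = B' a) : ¬B' k < B k := by
  intro hlt
  have hu : u (x (B' k, k)) = 0 := hstd k (B' k) hlt fun a ha => hk a ha ▸ B'.strictMono ha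
  have hexp := DFunLike.congr_fun h (x (B' k, k))
  rw [Finsupp.add_apply, Finsupp.add_apply, termExponent_one_apply, termExponent_one_apply, hu,
    if_neg hlt.ne', if_pos rfl] at hexp
  omega

theorem IsStandard.eq_of_add_termExponent_eq {u u' : σ →₀ ℕ} {B B' : Fin j ↪o Fin m}
    (hstd : IsStandard x u B) (hstd' : IsStandard x u' B')
    (h : u + termExponent x B 1 = u' + termExponent x B' 1) : u = u' ∧ B = B' := by
  obtain rfl : B = B' := by
    ext1 k
    induction k using WellFoundedLT.induction with
    | _ k ih =>
      exact le_antisymm (not_lt.1 (hstd.not_lt_of_eq_below h ih))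
        (not_lt.1 (hstd'.not_lt_of_eq_below h.symm fun a ha => (ih a ha).symm))
  exact ⟨add_right_cancel h, rfl⟩

variable (x) in
/-- The quantity that decreases when a nonstandard product is straightened. The odd column weights
`2 * a + 1` of the minor interlace the even column weights `2 * c` of the monomial, so exchanging a
variable of the monomial with a row of the minor always changes it. -/
noncomputable def straighteningRank (u : σ →₀ ℕ) (B : Fin j ↪o Fin m) : ℕ :=
  2 * diagonalWeight x u + ∑ a, (B a : ℕ) * (2 * a + 1)

theorem straighteningRank_add_single (u : σ →₀ ℕ) (A : Fin (j + 1) ↪o Fin m) (k : Fin j)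
    (l : Fin (j + 1)) :
    straighteningRank x (u + Finsupp.single (x (A l, k)) 1) ((Fin.succAboveOrderEmb l).trans A) =
      2 * diagonalWeight x u +
        ((A l : ℕ) * (2 * k) + ∑ a, (A (l.succAbove a) : ℕ) * (2 * a + 1)) := by
  simp only [straighteningRank, map_add, diagonalWeight_single, RelEmbedding.coe_trans,
    Function.comp_apply, Fin.succAboveOrderEmb_apply]
  ring

theorem straighteningRank_exchange_lt (u : σ →₀ ℕ) (A : Fin (j + 1) ↪o Fin m) (k : Fin j)
    {l : Fin (j + 1)} (hl : l ≠ k.castSucc) :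
    straighteningRank x (u + Finsupp.single (x (A l, k)) 1) ((Fin.succAboveOrderEmb l).trans A) <
      straighteningRank x (u + Finsupp.single (x (A k.castSucc, k)) 1)
        ((Fin.succAboveOrderEmb k.castSucc).trans A) := by
  let g : Fin (j + 1) → ℕ := Fin.insertNth k.castSucc (2 * (k : ℕ)) fun a => 2 * (a : ℕ) + 1
  have hg : StrictMono g := by
    refine (Fin.strictMono_insertNth_iff _ _ _).2 ⟨fun a b h => ?_, fun a h => ?_, fun a h => ?_⟩
    all_goals simp only [Fin.lt_def, Fin.le_def, Fin.val_castSucc] at *; omega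
  let τ : Equiv.Perm (Fin (j + 1)) := (finSuccEquiv' k.castSucc).trans (finSuccEquiv' l).symm
  have hτ : τ ≠ 1 := fun h => hl (by simpa [τ] using DFunLike.congr_fun h k.castSucc)
  have hlt := sum_comp_perm_mul_lt_sum_mul (f := fun p => (A p : ℕ)) A.strictMono hg hτ
  rw [Fin.sum_univ_succAbove _ k.castSucc, Fin.sum_univ_succAbove _ k.castSucc] at hlt
  rw [straighteningRank_add_single, straighteningRank_add_single]
  simpa [g, τ] using hlt

variable {R}

theorem monomial_mul_maximalMinor_mem_of_exchange {S : Submodule R (MvPolynomial σ R)}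
    {u : σ →₀ ℕ} {A : Fin (j + 1) ↪o Fin m} {k : Fin j} {p : Fin (j + 1)}
    (hS : ∀ l ≠ p, monomial (u + Finsupp.single (x (A l, k)) 1) 1 *
      maximalMinor R x ((Fin.succAboveOrderEmb l).trans A) ∈ S) :
    monomial (u + Finsupp.single (x (A p, k)) 1) 1 *
      maximalMinor R x ((Fin.succAboveOrderEmb p).trans A) ∈ S := by
  let term : Fin (j + 1) → MvPolynomial σ R := fun l =>
    monomial (u + Finsupp.single (x (A l, k)) 1) 1 *
      maximalMinor R x ((Fin.succAboveOrderEmb l).trans A)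
  have hrel : ∑ l : Fin (j + 1), ((-1 : R) ^ (l : ℕ)) • term l = 0 := by
    have hdet := sum_mul_det_submatrix_succAbove_eq_zero
      (Matrix.of fun l b => (X (x (A l, b)) : MvPolynomial σ R)) k
    rw [← mul_zero (monomial u 1), ← hdet, Finset.mul_sum]
    refine Finset.sum_congr rfl fun l _ => ?_
    have hmon : monomial (u + Finsupp.single (x (A l, k)) 1) (1 : R) =
        monomial u 1 * X (x (A l, k)) := by
      rw [X, monomial_mul, one_mul]
    have hminor : ((Matrix.of fun l b => (X (x (A l, b)) : MvPolynomial σ R)).submatrix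
        l.succAbove id).det = maximalMinor R x ((Fin.succAboveOrderEmb l).trans A) := rfl
    simp only [term, hmon, hminor, smul_eq_C_mul, map_pow, map_neg, map_one, Matrix.of_apply]
    ring
  rw [← Finset.add_sum_erase _ _ (Finset.mem_univ p)] at hrel
  have hsmul : ((-1 : R) ^ (p : ℕ)) • term p ∈ S := by
    rw [eq_neg_of_add_eq_zero_left hrel]
    exact S.neg_mem (S.sum_mem fun l hl => S.smul_mem _ (hS l (Finset.ne_of_mem_erase hl)))
  exact (S.smul_mem_iff_of_isUnit (isUnit_one.neg.pow _)).1 hsmul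

theorem monomial_mul_maximalMinor_mem {S : Submodule R (MvPolynomial σ R)}
    (hS : ∀ u B, IsStandard x u B → monomial u 1 * maximalMinor R x B ∈ S) (u : σ →₀ ℕ)
    (B : Fin j ↪o Fin m) : monomial u 1 * maximalMinor R x B ∈ S := by
  induction hrank : straighteningRank x u B using Nat.strong_induction_on generalizing u B with
  | _ N ih =>
  subst hrank
  by_cases hstd : IsStandard x u B
  · exact hS u B hstd
  unfold IsStandard at hstd
  push Not at hstd
  obtain ⟨k, r, hrk, hlt, hu⟩ := hstd
  obtain ⟨A, rfl, rfl⟩ := exists_orderEmbedding_insert hrk hlt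
  obtain ⟨u, rfl⟩ : ∃ u', u = u' + Finsupp.single (x (A k.castSucc, k)) 1 :=
    ⟨_, (tsub_add_cancel_of_le (Finsupp.single_le_iff.2 (Nat.one_le_iff_ne_zero.2 hu))).symm⟩
  exact monomial_mul_maximalMinor_mem_of_exchange fun l hl =>
    ih _ (straighteningRank_exchange_lt u A k hl) _ _ rfl

theorem maximalMinorIdeal_le_span_isStandard :
    (maximalMinorIdeal R x).restrictScalars R ≤
      Submodule.span R (Set.range
        fun q : {q : (σ →₀ ℕ) × (Fin j ↪o Fin m) // IsStandard x q.1 q.2} =>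
          monomial q.1.1 1 * maximalMinor R x q.1.2) := by
  rw [maximalMinorIdeal, restrictScalars_span_eq_span_monomial_mul, Submodule.span_le]
  rintro _ ⟨_, ⟨u, rfl⟩, _, ⟨B, rfl⟩, rfl⟩
  refine monomial_mul_maximalMinor_mem (fun u B hstd => ?_) u B
  exact Submodule.subset_span ⟨⟨(u, B), hstd⟩, rfl⟩

theorem J0_mul_K0_eq_inf_general {T : Set σ}
    (hT : ∀ (B : Fin j ↪o Fin m) (k : Fin j), x (B k, k) ∉ T) :
    Ideal.span (X '' T) * maximalMinorIdeal R x = Ideal.span (X '' T) ⊓ maximalMinorIdeal R x := by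
  refine span_X_image_mul_eq_inf (fun q => Ideal.subset_span ⟨_, rfl⟩)
    maximalMinorIdeal_le_span_isStandard (fun q => hasDominantExponent_maximalMinor R x q.1.2)
    (fun q q' h => ?_) fun q s hs => ?_
  · obtain ⟨hu, hB⟩ := q.2.eq_of_add_termExponent_eq q'.2 h
    exact Subtype.ext (Prod.ext hu hB)
  · rw [termExponent, Finsupp.finsetSum_apply]
    exact Finset.sum_eq_zero fun k _ =>
      Finsupp.single_eq_of_ne fun h => hT q.1.2 k (h ▸ hs)

end MaximalMinors

/-- The positions of the last `n - 1` rows and the first `j` columns of an `n × n` matrix. -/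
def lowerLeftBlock {n j : ℕ} (hj : j ≤ n) : Fin (n - 1) × Fin j ↪ Fin n × Fin n where
  toFun p := (⟨p.1 + 1, by omega⟩, Fin.castLE hj p.2)
  inj' p q h := by
    simp only [Prod.mk.injEq, Fin.mk.injEq, Fin.castLE_inj, Nat.add_right_cancel_iff] at h
    exact Prod.ext (Fin.ext h.1) h.2

theorem J0_eq_span_X_image (n : ℕ) [NeZero n] (i : ℕ) :
    J0 n i = Ideal.span (X '' {p | p.1 = rowN n ∧ (p.2 : ℕ) < i}) := by
  unfold J0 z0
  congr 1
  ext f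
  constructor
  · rintro ⟨k, hk, rfl⟩
    exact ⟨(rowN n, k), ⟨rfl, hk⟩, rfl⟩
  · rintro ⟨⟨_, k⟩, ⟨rfl, hk⟩, rfl⟩
    exact ⟨k, hk, rfl⟩

theorem K0_eq_maximalMinorIdeal (n : ℕ) [NeZero n] {j : ℕ} (hj : j ≤ n) :
    K0 n j = maximalMinorIdeal ℂ (lowerLeftBlock hj) := by
  have hcol : ∀ (b : Fin j) (h : (b : ℕ) % n < n), (⟨b % n, h⟩ : Fin n) = Fin.castLE hj b :=
    fun b _ => Fin.ext (Nat.mod_eq_of_lt (b.2.trans_le hj))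
  unfold K0 maximalMinorIdeal
  simp only [hcol]
  congr 1
  ext f
  constructor
  · rintro ⟨B, hB, hB1, rfl⟩
    let B' : Fin j ↪o Fin (n - 1) :=
      OrderEmbedding.ofStrictMono (fun a => ⟨B a - 1, by have := hB1 a; omega⟩)
        fun a b hab => Nat.sub_lt_sub_right (hB1 a) (hB hab)
    have hentry : ∀ a b, lowerLeftBlock hj (B' a, b) = (B a, Fin.castLE hj b) :=
      fun a b => Prod.ext (Fin.ext (Nat.sub_add_cancel (hB1 a))) rfl
    exact ⟨B', by simp only [maximalMinor, hentry, z0]⟩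
  · rintro ⟨B, rfl⟩
    exact ⟨fun a => ⟨B a + 1, by omega⟩, fun a b hab => Nat.succ_lt_succ (B.strictMono hab),
      fun a => Nat.le_add_left 1 _, rfl⟩

theorem lowerLeftBlock_diagonal_notMem {n : ℕ} [NeZero n] {i j : ℕ} (hij : i < j) (hj : j ≤ n)
    (B : Fin j ↪o Fin (n - 1)) (k : Fin j) :
    lowerLeftBlock hj (B k, k) ∉ {p : Fin n × Fin n | p.1 = rowN n ∧ (p.2 : ℕ) < i} := by
  rintro ⟨hrow, hcol⟩
  have hlast : (B k : ℕ) + 1 = n - 1 := congrArg Fin.val hrow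
  have hlt : B k < B ⟨i, hij⟩ := B.strictMono hcol
  have := (B ⟨i, hij⟩).2
  rw [Fin.lt_def] at hlt
  omega

/-- In `ℂ[z_{11}, …, z_{nn}]`, for all `1 ≤ i < j ≤ n`, the product ideal
`J_i^0 · K_j` equals the intersection `J_i^0 ∩ K_j`. -/
theorem J0_mul_K0_eq_inf (n : ℕ) [NeZero n] (hn : 2 ≤ n) (i j : ℕ)
    (hi : 1 ≤ i) (hij : i < j) (hj : j ≤ n) :
    J0 n i * K0 n j = J0 n i ⊓ K0 n j := by
  rw [J0_eq_span_X_image, K0_eq_maximalMinorIdeal n hj]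
  exact J0_mul_K0_eq_inf_general (lowerLeftBlock_diagonal_notMem hij hj)
end

section
/- In C[t, z_{11}, ..., z_{nn}], for all 0 ≤ i < j ≤ n the ideal J_i^t + K_j is saturated with respect to the element t; that is, if t^k f ∈ J_i^t + K_j for some k ≥ 0, then f ∈ J_i^t + K_j. -/
open MvPolynomial

/-!
The relations in `J_i^t` eliminate `z_{nk}` for `k ≤ i`. This turns `J_i^t + K_j` into the ideal
`I` of maximal minors of the matrix `M` whose rows are the rows `2, …, n - 1` of `(z_{kℓ})` with
`ℓ ≤ j`, and the row `(-t z_{11}, …, -t z_{1i}, z_{n,i+1}, …, z_{nj})`; `t` has to be regular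
modulo `I`.

Over any ring, the maximal minors satisfy the linear Eagon–Northcott relations, which express that a
determinant with a repeated column vanishes. If these relations present the ideal of maximal minors
of `M` at `t = 0`, then `I / t I → R / t R` is injective, because the relations hold in `I / t I`
as well; hence `t x ∈ I` forces `t x ∈ t I`, that is `x ∈ I`.

The presentation at `t = 0` holds because the corner entry `z_{nj}` survives (`i < j`) and occurs
nowhere else, and above it stands a generic matrix: adjoining a last row with a new variable `X` in
the corner preserves the presentation property. The relations confine every linear combination of
the generators to a filtration whose graded pieces are governed by the smaller matrix, and the
`X`-degree of its image separates the pieces.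
-/

section PolynomialModule

open scoped Polynomial

variable {Q W : Type*} [CommRing Q] [AddCommGroup W] [Module Q[X] W] [Module Q W]
  [IsScalarTower Q Q[X] W]

/-- The increasing filtration `A + C + X C + ⋯ + X ^ (n - 1) C` of the `Q[X]`-submodule generated
by `A` and `C`, in the situation `X A ⊆ C`. -/
noncomputable def polynomialFiltration (A C : Submodule Q W) : ℕ → Submodule Q W
  | 0 => A
  | n + 1 => polynomialFiltration A C n ⊔
      C.map (Algebra.lsmul Q Q W ((Polynomial.X : Q[X]) ^ n))

theorem polynomialFiltration_mono (A C : Submodule Q W) : Monotone (polynomialFiltration A C) :=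
  monotone_nat_of_le_succ fun _ => le_sup_left

theorem X_pow_smul_mem_polynomialFiltration (A : Submodule Q W) {C : Submodule Q W} {c : W}
    (hc : c ∈ C) (n : ℕ) :
    (Polynomial.X : Q[X]) ^ n • c ∈ polynomialFiltration A C (n + 1) :=
  Submodule.mem_sup_right ⟨c, hc, rfl⟩

variable {A C : Submodule Q W}

theorem X_smul_mem_polynomialFiltration
    (hXA : ∀ a ∈ A, (Polynomial.X : Q[X]) • a ∈ C) {n : ℕ} {w : W}
    (hw : w ∈ polynomialFiltration A C n) :
    (Polynomial.X : Q[X]) • w ∈ polynomialFiltration A C (n + 1) := by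
  induction n generalizing w with
  | zero => simpa using X_pow_smul_mem_polynomialFiltration A (hXA w hw) 0
  | succ n ih =>
    obtain ⟨u, hu, _, ⟨c, hc, rfl⟩, rfl⟩ := Submodule.mem_sup.1 hw
    rw [smul_add]
    refine add_mem (polynomialFiltration_mono A C (n + 1).le_succ (ih hu)) ?_
    simpa only [Algebra.lsmul_coe, smul_smul, ← pow_succ'] using
      X_pow_smul_mem_polynomialFiltration A hc (n + 1)

theorem polynomial_smul_mem {T : Submodule Q W}
    (hT : ∀ w ∈ T, (Polynomial.X : Q[X]) • w ∈ T) (f : Q[X]) {w : W}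
    (hw : w ∈ T) : f • w ∈ T := by
  induction f using Polynomial.induction_on generalizing w with
  | C q =>
    rw [← Polynomial.algebraMap_eq, algebraMap_smul]
    exact T.smul_mem q hw
  | add f g hf hg => rw [add_smul]; exact add_mem (hf hw) (hg hw)
  | monomial n q ih =>
    rw [pow_succ, ← mul_assoc, mul_smul]
    exact ih (hT w hw)

theorem exists_mem_polynomialFiltration
    (hXA : ∀ a ∈ A, (Polynomial.X : Q[X]) • a ∈ C) {w : W}
    (hw : w ∈ Submodule.span Q[X] (A ∪ C : Set W)) :
    ∃ n, w ∈ polynomialFiltration A C n := by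
  have hdir := (polynomialFiltration_mono A C).directed_le
  suffices w ∈ ⨆ n, polynomialFiltration A C n from (Submodule.mem_iSup_of_directed _ hdir).1 this
  induction hw using Submodule.span_induction with
  | mem w hw =>
    rcases hw with hw | hw
    · exact Submodule.mem_iSup_of_mem 0 hw
    · exact Submodule.mem_iSup_of_mem 1
        (by simpa using X_pow_smul_mem_polynomialFiltration A hw 0)
  | zero => exact zero_mem _
  | add _ _ _ _ hu hw => exact add_mem hu hw
  | smul f w _ hw =>
    refine polynomial_smul_mem (fun w hw => ?_) f hw
    obtain ⟨n, hn⟩ := (Submodule.mem_iSup_of_directed _ hdir).1 hw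
    exact Submodule.mem_iSup_of_mem (n + 1) (X_smul_mem_polynomialFiltration hXA hn)

variable {π : W →ₗ[Q[X]] Q[X]}

theorem degree_le_of_mem_polynomialFiltration (hA : ∀ a ∈ A, (π a).degree ≤ 0)
    (hC : ∀ c ∈ C, (π c).degree ≤ 1) {n : ℕ} {w : W} (hw : w ∈ polynomialFiltration A C n) :
    (π w).degree ≤ n := by
  induction n generalizing w with
  | zero => exact hA w hw
  | succ n ih =>
    obtain ⟨u, hu, _, ⟨c, hc, rfl⟩, rfl⟩ := Submodule.mem_sup.1 hw
    rw [map_add, Algebra.lsmul_coe, map_smul, smul_eq_mul]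
    refine Polynomial.degree_add_le_of_degree_le ((ih hu).trans (mod_cast n.le_succ)) ?_
    exact Polynomial.degree_mul_le_of_le (Polynomial.degree_X_pow_le n) (hC c hc)

theorem mem_polynomialFiltration_of_mem_succ
    (hXA : ∀ a ∈ A, (Polynomial.X : Q[X]) • a ∈ C) (hA : ∀ a ∈ A, (π a).degree ≤ 0)
    (hC : ∀ c ∈ C, (π c).degree ≤ 1) (hCA : ∀ c ∈ C, (π c).coeff 1 = 0 → c ∈ A)
    {n : ℕ} {w : W} (hw : w ∈ polynomialFiltration A C (n + 1))
    (hcoeff : (π w).coeff (n + 1) = 0) : w ∈ polynomialFiltration A C n := by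
  obtain ⟨u, hu, _, ⟨c, hc, rfl⟩, rfl⟩ := Submodule.mem_sup.1 hw
  refine add_mem hu ?_
  have hucoeff : (π u).coeff (n + 1) = 0 := Polynomial.coeff_eq_zero_of_degree_lt <|
    (degree_le_of_mem_polynomialFiltration hA hC hu).trans_lt (mod_cast n.lt_succ_self)
  have hcA : c ∈ A := hCA c hc <| by
    rwa [map_add, Polynomial.coeff_add, hucoeff, zero_add, Algebra.lsmul_coe, map_smul,
      smul_eq_mul, add_comm n, Polynomial.coeff_X_pow_mul] at hcoeff
  cases n with
  | zero => simpa [polynomialFiltration] using hcA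
  | succ n =>
    simpa only [Algebra.lsmul_coe, smul_smul, ← pow_succ] using
      X_pow_smul_mem_polynomialFiltration A (hXA c hcA) n

/-- The top coefficient of `π w` only sees the last layer of the filtration, so the vanishing of
`π w` pushes `w` down to `A` one layer at a time. -/
theorem eq_zero_of_mem_span_union_of_map_eq_zero
    (hXA : ∀ a ∈ A, (Polynomial.X : Q[X]) • a ∈ C) (hA : ∀ a ∈ A, (π a).degree ≤ 0)
    (hA0 : ∀ a ∈ A, π a = 0 → a = 0)
    (hC : ∀ c ∈ C, (π c).degree ≤ 1) (hCA : ∀ c ∈ C, (π c).coeff 1 = 0 → c ∈ A)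
    {w : W} (hw : w ∈ Submodule.span Q[X] (A ∪ C : Set W)) (hπ : π w = 0) :
    w = 0 := by
  obtain ⟨n, hn⟩ := exists_mem_polynomialFiltration hXA hw
  induction n with
  | zero => exact hA0 w hn hπ
  | succ n ih =>
    exact ih (mem_polynomialFiltration_of_mem_succ hXA hA hC hCA hn (by simp [hπ]))

end PolynomialModule

section EagonNorthcott

universe u

variable {m j : ℕ}

/-- The maximal minor of `M` on the rows selected by `B`. -/
def maxMinor {R : Type*} [CommRing R] (M : Matrix (Fin m) (Fin j) R) (B : Fin j ↪o Fin m) : R :=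
  (M.submatrix B id).det

/-- The linear Eagon–Northcott relations on a family `v` indexed like the maximal minors of `M`:
`v` satisfies the relations that hold between the maximal minors because a determinant with a
repeated column vanishes. The signs are those of the expansion along a last column. -/
def EagonNorthcottRel {R V : Type*} [CommRing R] [AddCommGroup V] [Module R V]
    (M : Matrix (Fin m) (Fin j) R) (v : (Fin j ↪o Fin m) → V) : Prop :=
  ∀ (D : Fin (j + 1) ↪o Fin m) (c : Fin j),
    ∑ a : Fin (j + 1), ((-1) ^ (a + j : ℕ) * M (D a) c) • v (a.succAboveOrderEmb.trans D) = 0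

/-- The ideal of maximal minors of `M` is presented by the Eagon–Northcott relations. This is
phrased as a universal property: any module generated by a family satisfying these relations and
mapping to the maximal minors maps injectively to the ring. -/
def IsEagonNorthcottPresented {R : Type u} [CommRing R] (M : Matrix (Fin m) (Fin j) R) : Prop :=
  ∀ (V : Type u) [AddCommGroup V] [Module R V] (v : (Fin j ↪o Fin m) → V) (π : V →ₗ[R] R),
    EagonNorthcottRel M v → (∀ B, π (v B) = maxMinor M B) →
      ∀ w ∈ Submodule.span R (Set.range v), π w = 0 → w = 0

theorem maxMinor_map {R S : Type*} [CommRing R] [CommRing S] (φ : R →+* S)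
    (M : Matrix (Fin m) (Fin j) R) (B : Fin j ↪o Fin m) :
    maxMinor (M.map φ) B = φ (maxMinor M B) :=
  (φ.map_det _).symm

theorem eagonNorthcottRel_maxMinor {R : Type*} [CommRing R] (M : Matrix (Fin m) (Fin j) R) :
    EagonNorthcottRel M (maxMinor M) := by
  intro D c
  let M' : Matrix (Fin (j + 1)) (Fin (j + 1)) R :=
    Matrix.of fun a => Fin.snoc (M (D a)) (M (D a) c)
  have hM' : M'.det = 0 :=
    Matrix.det_zero_of_column_eq (Fin.castSucc_lt_last c).ne fun a => by simp [M']
  rw [Matrix.det_succ_column _ (Fin.last j)] at hM'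
  rw [← hM']
  refine Finset.sum_congr rfl fun a _ => ?_
  have hsub : (M'.submatrix a.succAbove (Fin.last j).succAbove) =
      M.submatrix (a.succAboveOrderEmb.trans D) id := by
    ext
    simp [M']
  rw [hsub]
  simp [M', maxMinor]

theorem EagonNorthcottRel.map {R S V W : Type*} [CommRing R] [CommRing S] [Algebra R S]
    [AddCommGroup V] [Module R V] [AddCommGroup W] [Module R W] [Module S W] [IsScalarTower R S W]
    {M : Matrix (Fin m) (Fin j) R} {v : (Fin j ↪o Fin m) → V} (hv : EagonNorthcottRel M v)
    (f : V →ₗ[R] W) : EagonNorthcottRel (M.map (algebraMap R S)) (f ∘ v) := by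
  intro D c
  rw [← map_zero f, ← hv D c, map_sum]
  refine Finset.sum_congr rfl fun a _ => ?_
  rw [map_smul, ← algebraMap_smul (R := R) S]
  simp

theorem IsEagonNorthcottPresented.of_map {R S : Type u} [CommRing R] [CommRing S] (e : R ≃+* S)
    {M : Matrix (Fin m) (Fin j) R} (hM : IsEagonNorthcottPresented (M.map e)) :
    IsEagonNorthcottPresented M := by
  intro V _ _ v π hv hπv w hw hπw
  let _ : Algebra S R := e.symm.toRingHom.toAlgebra
  let _ : Module S V := Module.compHom V (e.symm : S →+* R)
  have : IsScalarTower S R V := IsScalarTower.of_algebraMap_smul fun _ _ => rfl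
  have hsmul : ∀ (r : R) (w : V), e r • w = r • w := fun r w =>
    congrArg (· • w) (e.symm_apply_apply r)
  let π' : V →ₗ[S] S :=
    { toFun := fun w => e (π w)
      map_add' := by simp
      map_smul' := fun s w => by
        have : s • w = e.symm s • w := rfl
        simp [this] }
  refine hM V v π' (fun D c => ?_) (fun B => ?_) w ?_ (by simp [π', hπw])
  · rw [← hv D c]
    refine Finset.sum_congr rfl fun a _ => ?_
    rw [← hsmul]
    simp
  · exact (congrArg e (hπv B)).trans (maxMinor_map e.toRingHom M B).symm
  · rwa [← Submodule.restrictScalars_span S R e.symm.surjective]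

/-- The set of rows `B` together with an additional last row. -/
def addLastRow (B : Fin j ↪o Fin m) : Fin (j + 1) ↪o Fin (m + 1) :=
  OrderEmbedding.ofStrictMono (Fin.snoc (Fin.castSucc ∘ B) (Fin.last m)) <| by
    intro a b hab
    cases a using Fin.lastCases with
    | last => exact absurd hab (Fin.le_last b).not_gt
    | cast a =>
      cases b using Fin.lastCases with
      | last => simp
      | cast b => simpa using hab

@[simp]
theorem addLastRow_castSucc (B : Fin j ↪o Fin m) (a : Fin j) :
    addLastRow B a.castSucc = (B a).castSucc :=
  Fin.snoc_castSucc (α := fun _ => Fin (m + 1)) _ _ _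

@[simp]
theorem addLastRow_last (B : Fin j ↪o Fin m) : addLastRow B (Fin.last j) = Fin.last m :=
  Fin.snoc_last (α := fun _ => Fin (m + 1)) _ _

theorem succAboveOrderEmb_castSucc_trans_addLastRow (B : Fin (j + 1) ↪o Fin m)
    (a : Fin (j + 1)) : a.castSucc.succAboveOrderEmb.trans (addLastRow B) =
      addLastRow (a.succAboveOrderEmb.trans B) := by
  ext b
  cases b using Fin.lastCases <;> simp

theorem succAboveOrderEmb_last_trans_addLastRow (B : Fin j ↪o Fin m) :
    (Fin.last j).succAboveOrderEmb.trans (addLastRow B) = B.trans Fin.castSuccOrderEmb := by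
  ext b
  simp

theorem exists_eq_trans_castSucc_or_eq_addLastRow (B : Fin (j + 1) ↪o Fin (m + 1)) :
    (∃ B' : Fin (j + 1) ↪o Fin m, B = B'.trans Fin.castSuccOrderEmb) ∨
      ∃ D : Fin j ↪o Fin m, B = addLastRow D := by
  by_cases hlast : B (Fin.last j) = Fin.last m
  · right
    have hne (a : Fin j) : B a.castSucc ≠ Fin.last m := by
      simp [← hlast, a.castSucc_ne_last]
    refine ⟨OrderEmbedding.ofStrictMono (fun a => (B a.castSucc).castPred (hne a))
      fun a b hab => by simpa using hab, ?_⟩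
    ext a
    cases a using Fin.lastCases with
    | last => rw [hlast, addLastRow_last]
    | cast a => rw [addLastRow_castSucc]; rfl
  · left
    have hne (a : Fin (j + 1)) : B a ≠ Fin.last m :=
      ((B.monotone (Fin.le_last a)).trans_lt (Fin.lt_last_iff_ne_last.2 hlast)).ne
    refine ⟨OrderEmbedding.ofStrictMono (fun a => (B a).castPred (hne a))
      fun a b hab => by simpa using hab, ?_⟩
    rfl

theorem EagonNorthcottRel.last_smul_eq_sum {R V : Type*} [CommRing R] [AddCommGroup V]
    [Module R V] {M : Matrix (Fin (m + 1)) (Fin (j + 1)) R}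
    {v : (Fin (j + 1) ↪o Fin (m + 1)) → V} (hv : EagonNorthcottRel M v)
    (B : Fin (j + 1) ↪o Fin m) (c : Fin (j + 1)) :
    M (Fin.last m) c • v (B.trans Fin.castSuccOrderEmb) =
      ∑ a : Fin (j + 1), ((-1) ^ (a + j : ℕ) * M (B a).castSucc c) •
        v (addLastRow (a.succAboveOrderEmb.trans B)) := by
  have h := hv (addLastRow B) c
  have hsign : (-1 : R) ^ (j + 1 + j) = -1 := Odd.neg_one_pow ⟨j, by ring⟩
  rw [Fin.sum_univ_castSucc] at h
  simp only [succAboveOrderEmb_castSucc_trans_addLastRow,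
    succAboveOrderEmb_last_trans_addLastRow, addLastRow_castSucc, addLastRow_last,
    Fin.val_castSucc, Fin.val_last, ← add_assoc, pow_succ, mul_neg_one, neg_mul, neg_smul,
    Finset.sum_neg_distrib, hsign, one_mul, neg_neg] at h
  exact (neg_add_eq_zero.1 h).symm

open scoped Polynomial

/-- The matrix `N` over `Q`, extended by the last row `(r, X)`, where `X` is a new variable. -/
noncomputable def adjoinVarRow {Q : Type*} [CommRing Q] (N : Matrix (Fin m) (Fin (j + 1)) Q)
    (r : Fin j → Q) : Matrix (Fin (m + 1)) (Fin (j + 1)) Q[X] :=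
  Matrix.of (Fin.snoc (fun a b => Polynomial.C (N a b))
    (Fin.snoc (fun b => Polynomial.C (r b)) Polynomial.X))

namespace adjoinVarRow

section

variable {Q : Type*} [CommRing Q] (N : Matrix (Fin m) (Fin (j + 1)) Q) (r : Fin j → Q)

@[simp]
theorem apply_castSucc (a : Fin m) (b : Fin (j + 1)) :
    adjoinVarRow N r a.castSucc b = Polynomial.C (N a b) := by
  simp [adjoinVarRow]

@[simp]
theorem apply_last_castSucc (b : Fin j) :
    adjoinVarRow N r (Fin.last m) b.castSucc = Polynomial.C (r b) := by
  simp [adjoinVarRow]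

@[simp]
theorem apply_last_last : adjoinVarRow N r (Fin.last m) (Fin.last j) = Polynomial.X := by
  simp [adjoinVarRow]

theorem maxMinor_trans_castSucc (B : Fin (j + 1) ↪o Fin m) :
    maxMinor (adjoinVarRow N r) (B.trans Fin.castSuccOrderEmb) =
      Polynomial.C (maxMinor N B) := by
  rw [← maxMinor_map]
  refine congrArg Matrix.det ?_
  ext a b : 1
  simp

theorem exists_maxMinor_addLastRow (D : Fin j ↪o Fin m) :
    ∃ q : Q, maxMinor (adjoinVarRow N r) (addLastRow D) =
      Polynomial.C q + Polynomial.C (maxMinor (N.submatrix id Fin.castSucc) D) * Polynomial.X := by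
  have hminor (c : Fin (j + 1)) :
      (((adjoinVarRow N r).submatrix (addLastRow D) id).submatrix (Fin.last j).succAbove
        c.succAbove).det = Polynomial.C ((N.submatrix D c.succAbove).det) := by
    rw [RingHom.map_det]
    refine congrArg Matrix.det ?_
    ext a b : 1
    simp
  refine ⟨∑ b : Fin j, (-1) ^ (j + b : ℕ) * r b *
    (N.submatrix D b.castSucc.succAbove).det, ?_⟩
  rw [maxMinor, Matrix.det_succ_row _ (Fin.last j), Fin.sum_univ_castSucc]
  simp only [hminor]
  simp [maxMinor, (Even.add_self j).neg_one_pow, mul_comm Polynomial.X]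

variable {N r} {V : Type*} [AddCommGroup V] [Module Q V] {v : (Fin (j + 1) ↪o Fin (m + 1)) → V}

variable (Q v) in
/-- The span over the coefficient ring of the `v B` for which `B` avoids the last row. -/
def upperSpan : Submodule Q V :=
  Submodule.span Q (Set.range fun B : Fin (j + 1) ↪o Fin m => v (B.trans Fin.castSuccOrderEmb))

variable (Q v) in
/-- The span over the coefficient ring of the `v B` for which `B` contains the last row. -/
def lastRowSpan : Submodule Q V :=
  Submodule.span Q (Set.range fun D : Fin j ↪o Fin m => v (addLastRow D))

variable (Q v) in
theorem range_subset_union : Set.range v ⊆ upperSpan Q v ∪ lastRowSpan Q v := by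
  rintro _ ⟨B, rfl⟩
  rcases exists_eq_trans_castSucc_or_eq_addLastRow B with ⟨B, rfl⟩ | ⟨D, rfl⟩
  exacts [.inl (Submodule.subset_span ⟨B, rfl⟩), .inr (Submodule.subset_span ⟨D, rfl⟩)]

variable [Module Q[X] V] [IsScalarTower Q Q[X] V]

theorem eagonNorthcottRel_upper (hv : EagonNorthcottRel (adjoinVarRow N r) v) :
    EagonNorthcottRel N fun B => v (B.trans Fin.castSuccOrderEmb) := by
  intro D c
  rw [← hv (D.trans Fin.castSuccOrderEmb) c]
  refine Finset.sum_congr rfl fun a _ => ?_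
  rw [← algebraMap_smul (R := Q) Q[X]]
  simp only [Polynomial.algebraMap_eq, map_mul, map_pow, map_neg, map_one,
    RelEmbedding.coe_trans, Function.comp_apply, Fin.castSuccOrderEmb_apply, apply_castSucc]
  rfl

theorem last_smul_eq_sum (hv : EagonNorthcottRel (adjoinVarRow N r) v)
    (B : Fin (j + 1) ↪o Fin m) (c : Fin (j + 1)) :
    adjoinVarRow N r (Fin.last m) c • v (B.trans Fin.castSuccOrderEmb) =
      ∑ a : Fin (j + 1), ((-1) ^ (a + j : ℕ) * N (B a) c) •
        v (addLastRow (a.succAboveOrderEmb.trans B)) := by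
  rw [hv.last_smul_eq_sum]
  refine Finset.sum_congr rfl fun a _ => ?_
  rw [← algebraMap_smul (R := Q) Q[X]]
  simp

theorem X_smul_mem_lastRowSpan (hv : EagonNorthcottRel (adjoinVarRow N r) v) {w : V}
    (hw : w ∈ upperSpan Q v) : (Polynomial.X : Q[X]) • w ∈ lastRowSpan Q v := by
  suffices upperSpan Q v ≤
      (lastRowSpan Q v).comap (Algebra.lsmul Q Q V (Polynomial.X : Q[X])) from this hw
  rw [upperSpan, Submodule.span_le]
  rintro _ ⟨B, rfl⟩
  have h := last_smul_eq_sum hv B (Fin.last j)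
  rw [apply_last_last] at h
  rw [SetLike.mem_coe, Submodule.mem_comap, Algebra.lsmul_coe]
  beta_reduce
  rw [h]
  exact sum_mem fun a _ => Submodule.smul_mem _ _ (Submodule.subset_span ⟨_, rfl⟩)

theorem eagonNorthcottRel_mkQ (hv : EagonNorthcottRel (adjoinVarRow N r) v) :
    EagonNorthcottRel (N.submatrix id Fin.castSucc) fun D =>
      (upperSpan Q v).mkQ (v (addLastRow D)) := by
  intro B c
  have h := last_smul_eq_sum hv B c.castSucc
  rw [apply_last_castSucc, ← Polynomial.algebraMap_eq, algebraMap_smul] at h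
  have hmem : r c • v (B.trans Fin.castSuccOrderEmb) ∈ upperSpan Q v :=
    Submodule.smul_mem _ _ (Submodule.subset_span ⟨B, rfl⟩)
  rw [h, ← Submodule.Quotient.mk_eq_zero, ← Submodule.mkQ_apply, map_sum] at hmem
  simpa only [map_smul, Matrix.submatrix_apply, id_eq] using hmem

variable {π : V →ₗ[Q[X]] Q[X]}

theorem degree_le_zero_of_mem_upperSpan (hπv : ∀ B, π (v B) = maxMinor (adjoinVarRow N r) B)
    {w : V} (hw : w ∈ upperSpan Q v) : (π w).degree ≤ 0 := by
  suffices upperSpan Q v ≤ (Polynomial.degreeLE Q 0).comap (π.restrictScalars Q) from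
    Polynomial.mem_degreeLE.1 (this hw)
  refine Submodule.span_le.2 ?_
  rintro _ ⟨B, rfl⟩
  simpa [hπv, maxMinor_trans_castSucc, Polynomial.mem_degreeLE] using Polynomial.degree_C_le

theorem degree_le_one_of_mem_lastRowSpan (hπv : ∀ B, π (v B) = maxMinor (adjoinVarRow N r) B)
    {w : V} (hw : w ∈ lastRowSpan Q v) : (π w).degree ≤ 1 := by
  suffices lastRowSpan Q v ≤ (Polynomial.degreeLE Q 1).comap (π.restrictScalars Q) from
    Polynomial.mem_degreeLE.1 (this hw)
  refine Submodule.span_le.2 ?_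
  rintro _ ⟨D, rfl⟩
  obtain ⟨q, hq⟩ := exists_maxMinor_addLastRow N r D
  simpa [hπv, hq, Polynomial.mem_degreeLE, add_comm] using Polynomial.degree_linear_le

end

end adjoinVarRow

theorem isEagonNorthcottPresented_adjoinVarRow {Q : Type u} [CommRing Q]
    {N : Matrix (Fin m) (Fin (j + 1)) Q} (hN : IsEagonNorthcottPresented N)
    (hN' : IsEagonNorthcottPresented (N.submatrix id Fin.castSucc)) (r : Fin j → Q) :
    IsEagonNorthcottPresented (adjoinVarRow N r) := by
  intro V _ _ v π hv hπv w hw hπw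
  let _ : Module Q V := Module.compHom V (Polynomial.C : Q →+* Q[X])
  have : IsScalarTower Q Q[X] V := IsScalarTower.of_algebraMap_smul fun _ _ => rfl
  let A := adjoinVarRow.upperSpan Q v
  let coeffπ (n : ℕ) : V →ₗ[Q] Q := Polynomial.lcoeff Q n ∘ₗ π.restrictScalars Q
  have hA0 : ∀ a ∈ A, π a = 0 → a = 0 := fun a ha hπa =>
    hN V _ (coeffπ 0) (adjoinVarRow.eagonNorthcottRel_upper hv)
      (fun B => by simp [coeffπ, hπv, adjoinVarRow.maxMinor_trans_castSucc]) a ha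
      (by simp [coeffπ, hπa])
  have hA1 : A ≤ LinearMap.ker (coeffπ 1) := by
    refine Submodule.span_le.2 ?_
    rintro _ ⟨B, rfl⟩
    simp [coeffπ, hπv, adjoinVarRow.maxMinor_trans_castSucc]
  have hCA : ∀ c ∈ adjoinVarRow.lastRowSpan Q v, (π c).coeff 1 = 0 → c ∈ A := by
    intro c hc hcoeff
    rw [← Submodule.Quotient.mk_eq_zero]
    refine hN' (V ⧸ A) _ (A.liftQ (coeffπ 1) hA1) (adjoinVarRow.eagonNorthcottRel_mkQ hv)
      (fun D => ?_) _ ?_ hcoeff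
    · obtain ⟨q, hq⟩ := adjoinVarRow.exists_maxMinor_addLastRow N r D
      simp [coeffπ, hπv, hq]
    · have hmem := Submodule.mem_map_of_mem (f := A.mkQ) hc
      rwa [adjoinVarRow.lastRowSpan, Submodule.map_span, ← Set.range_comp] at hmem
  refine eq_zero_of_mem_span_union_of_map_eq_zero (fun a => adjoinVarRow.X_smul_mem_lastRowSpan hv)
    (fun _ => adjoinVarRow.degree_le_zero_of_mem_upperSpan hπv) hA0
    (fun _ => adjoinVarRow.degree_le_one_of_mem_lastRowSpan hπv) hCA ?_ hπw
  exact Submodule.span_mono (adjoinVarRow.range_subset_union Q v) hw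

theorem isEagonNorthcottPresented_of_no_rows {R : Type u} [CommRing R]
    (M : Matrix (Fin 0) (Fin (j + 1)) R) : IsEagonNorthcottPresented M := by
  intro V _ _ v π _ _ w hw _
  have : IsEmpty (Fin (j + 1) ↪o Fin 0) := ⟨fun B => (B 0).elim0⟩
  simpa [Set.range_eq_empty] using hw

theorem isEagonNorthcottPresented_of_no_columns {R : Type u} [CommRing R]
    (M : Matrix (Fin m) (Fin 0) R) : IsEagonNorthcottPresented M := by
  intro V _ _ v π _ hπv w hw hπw
  have : Unique (Fin 0 ↪o Fin m) := ⟨⟨OrderEmbedding.ofIsEmpty⟩, fun B => by ext a; exact a.elim0⟩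
  rw [Set.range_unique] at hw
  obtain ⟨r, rfl⟩ := Submodule.mem_span_singleton.1 hw
  have hr : r = 0 := by simpa [hπv, maxMinor] using hπw
  rw [hr, zero_smul]

section MvPolynomial

variable {σ k : Type*} [CommRing k]

/-- `MvPolynomial σ k` as the polynomial ring in the variable `s` over the polynomials in the
other variables. -/
noncomputable def polynomialEquivOfVar (k : Type*) [CommRing k] [DecidableEq σ] (s : σ) :
    MvPolynomial σ k ≃ₐ[k] (MvPolynomial {y // y ≠ s} k)[X] :=
  (renameEquiv k (Equiv.optionSubtypeNe s).symm).trans (optionEquivLeft k _)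

@[simp]
theorem polynomialEquivOfVar_X_self [DecidableEq σ] (s : σ) :
    polynomialEquivOfVar k s (X s) = Polynomial.X := by
  simp [polynomialEquivOfVar]

@[simp]
theorem polynomialEquivOfVar_rename [DecidableEq σ] {s : σ} (q : MvPolynomial {y // y ≠ s} k) :
    polynomialEquivOfVar k s (rename Subtype.val q) = Polynomial.C q := by
  suffices (polynomialEquivOfVar k s).toAlgHom.comp (rename Subtype.val) =
      IsScalarTower.toAlgHom k _ _ from DFunLike.congr_fun this q
  ext y : 1
  simp [polynomialEquivOfVar, Equiv.optionSubtypeNe_symm_of_ne y.2]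

theorem isEagonNorthcottPresented_of_corner_eq_X {s : σ}
    {N : Matrix (Fin m) (Fin (j + 1)) (MvPolynomial {y // y ≠ s} k)}
    (hN : IsEagonNorthcottPresented N)
    (hN' : IsEagonNorthcottPresented (N.submatrix id Fin.castSucc))
    (r : Fin j → MvPolynomial {y // y ≠ s} k)
    {M : Matrix (Fin (m + 1)) (Fin (j + 1)) (MvPolynomial σ k)}
    (hupper : ∀ a b, M a.castSucc b = rename Subtype.val (N a b))
    (hlast : ∀ b, M (Fin.last m) b.castSucc = rename Subtype.val (r b))
    (hcorner : M (Fin.last m) (Fin.last j) = X s) : IsEagonNorthcottPresented M := by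
  classical
  suffices M.map (polynomialEquivOfVar k s) = adjoinVarRow N r from
    .of_map (polynomialEquivOfVar k s).toRingEquiv
      (this ▸ isEagonNorthcottPresented_adjoinVarRow hN hN' r)
  ext a b : 2
  cases a using Fin.lastCases with
  | cast a => simp [hupper]
  | last =>
    cases b using Fin.lastCases with
    | last => simp [hcorner]
    | cast b => simp [hlast]

/-- The matrix of the variables `ι a b`, whose entries are independent when `ι` is injective. -/
noncomputable def genericMatrix (k : Type*) [CommRing k] {σ : Type*} (ι : Fin m → Fin j → σ) :
    Matrix (Fin m) (Fin j) (MvPolynomial σ k) :=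
  Matrix.of fun a b => X (ι a b)

theorem isEagonNorthcottPresented_genericMatrix (k : Type*) [CommRing k] {σ : Type*}
    {ι : Fin m → Fin j → σ} (hι : Function.Injective2 ι) :
    IsEagonNorthcottPresented (genericMatrix k ι) := by
  induction m generalizing σ j with
  | zero =>
    cases j with
    | zero => exact isEagonNorthcottPresented_of_no_columns _
    | succ j => exact isEagonNorthcottPresented_of_no_rows _
  | succ m ih =>
    cases j with
    | zero => exact isEagonNorthcottPresented_of_no_columns _
    | succ j =>
      have hne (a : Fin m) (b : Fin (j + 1)) :
          ι a.castSucc b ≠ ι (Fin.last m) (Fin.last j) :=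
        fun h => a.castSucc_ne_last (hι h).1
      have hne' (b : Fin j) : ι (Fin.last m) b.castSucc ≠ ι (Fin.last m) (Fin.last j) :=
        fun h => b.castSucc_ne_last (hι h).2
      refine isEagonNorthcottPresented_of_corner_eq_X (s := ι (Fin.last m) (Fin.last j))
        (N := genericMatrix k fun a b => ⟨ι a.castSucc b, hne a b⟩) (ih ?_) (ih ?_)
        (fun b => X ⟨_, hne' b⟩) (fun a b => ?_) (fun b => ?_) rfl
      · exact fun _ _ _ _ h => by simpa using hι (congrArg Subtype.val h)
      · exact fun _ _ _ _ h => by simpa using hι (congrArg Subtype.val h)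
      · simp [genericMatrix]
      · simp [genericMatrix]

end MvPolynomial

section Regular

/-- The ideal generated by the maximal minors of `M`. -/
def maxMinorIdeal {R : Type*} [CommRing R] (M : Matrix (Fin m) (Fin j) R) : Ideal R :=
  Ideal.span (Set.range (maxMinor M))

theorem map_maxMinorIdeal {R S : Type*} [CommRing R] [CommRing S] (φ : R →+* S)
    (M : Matrix (Fin m) (Fin j) R) :
    (maxMinorIdeal M).map φ = maxMinorIdeal (M.map φ) := by
  rw [maxMinorIdeal, maxMinorIdeal, Ideal.map_span, ← Set.range_comp]
  exact congrArg Ideal.span (congrArg Set.range (funext fun B => (maxMinor_map φ M B).symm))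

/-- The maximal minor of `M` on the rows `B`, as an element of the ideal it helps to generate. -/
def maxMinorIdealGen {R : Type*} [CommRing R] (M : Matrix (Fin m) (Fin j) R)
    (B : Fin j ↪o Fin m) : maxMinorIdeal M :=
  ⟨maxMinor M B, Ideal.subset_span ⟨B, rfl⟩⟩

theorem eagonNorthcottRel_maxMinorIdealGen {R : Type*} [CommRing R]
    (M : Matrix (Fin m) (Fin j) R) : EagonNorthcottRel M (maxMinorIdealGen M) := fun D c =>
  Subtype.ext (by simpa [maxMinorIdealGen] using eagonNorthcottRel_maxMinor M D c)

theorem span_range_maxMinorIdealGen {R : Type*} [CommRing R] (M : Matrix (Fin m) (Fin j) R) :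
    Submodule.span R (Set.range (maxMinorIdealGen M)) = ⊤ :=
  (Submodule.span_range_subtype_eq_top_iff (maxMinorIdeal M) fun B =>
    Ideal.subset_span ⟨B, rfl⟩).2 rfl

theorem IsEagonNorthcottPresented.isSMulRegular_quotient {R : Type u} [CommRing R] {t : R}
    (ht : IsSMulRegular R t) {M : Matrix (Fin m) (Fin j) R}
    (hM : IsEagonNorthcottPresented (M.map (Ideal.Quotient.mk (Ideal.span {t})))) :
    IsSMulRegular (R ⧸ maxMinorIdeal M) t := by
  rw [isSMulRegular_quotient_iff_mem_of_smul_mem]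
  intro x hx
  have hsurj : Function.Surjective (algebraMap R (R ⧸ Ideal.span {t})) :=
    Ideal.Quotient.mk_surjective
  let cls : maxMinorIdeal M →ₗ[R] QuotSMulTop t (maxMinorIdeal M) := Submodule.mkQ _
  let π : QuotSMulTop t (maxMinorIdeal M) →ₗ[R] R ⧸ Ideal.span {t} :=
    Submodule.liftQ _ ((Ideal.span {t}).mkQ ∘ₗ (maxMinorIdeal M).subtype) <| by
      rintro _ ⟨y, -, rfl⟩
      exact Ideal.Quotient.eq_zero_iff_mem.2 (Ideal.mem_span_singleton.2 ⟨y, rfl⟩)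
  have hspan : cls ⟨t • x, hx⟩ ∈ Submodule.span (R ⧸ Ideal.span {t})
      (Set.range (cls ∘ maxMinorIdealGen M)) := by
    rw [← Submodule.restrictScalars_mem R, Submodule.restrictScalars_span _ _ hsurj,
      Set.range_comp, ← Submodule.map_span, span_range_maxMinorIdealGen]
    exact Submodule.mem_map_of_mem trivial
  have h : cls ⟨t • x, hx⟩ = 0 := hM _ _ (π.extendScalarsOfSurjective hsurj)
    ((eagonNorthcottRel_maxMinorIdealGen M).map cls)
    (fun B => (maxMinor_map (Ideal.Quotient.mk (Ideal.span {t})) M B).symm) _ hspan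
    (Ideal.Quotient.eq_zero_iff_mem.2 (Ideal.mem_span_singleton.2 ⟨x, rfl⟩))
  obtain ⟨y, -, hy⟩ := (Submodule.Quotient.mk_eq_zero _).1 h
  exact ht (congrArg Subtype.val hy) ▸ y.2

theorem IsEagonNorthcottPresented.isSMulRegular_quotient_of_ker_eq_span {R S : Type u}
    [CommRing R] [CommRing S] {φ : R →+* S} (hφ : Function.Surjective φ) {t : R}
    (hker : RingHom.ker φ = Ideal.span {t}) (ht : IsSMulRegular R t)
    {M : Matrix (Fin m) (Fin j) R} (hM : IsEagonNorthcottPresented (M.map φ)) :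
    IsSMulRegular (R ⧸ maxMinorIdeal M) t := by
  let e : R ⧸ Ideal.span {t} ≃+* S :=
    (Ideal.quotEquivOfEq hker.symm).trans (RingHom.quotientKerEquivOfSurjective hφ)
  exact isSMulRegular_quotient ht (.of_map e hM)

end Regular

end EagonNorthcott

theorem mem_sup_iff_map_mem {R : Type*} [CommRing R] {ψ : R →+* R} {J K : Ideal R}
    (hψ : ∀ g, ψ g - g ∈ J) (hJ : J ≤ RingHom.ker ψ) {f : R} :
    f ∈ J ⊔ K ↔ ψ f ∈ K.map ψ := by
  constructor
  · suffices J ⊔ K ≤ (K.map ψ).comap ψ from fun hf => this hf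
    exact sup_le (hJ.trans (Ideal.ker_le_comap ψ)) Ideal.le_comap_map
  · suffices K.map ψ ≤ J ⊔ K from fun hf => by
      simpa using sub_mem (this hf) (Ideal.mem_sup_left (hψ f))
    refine Ideal.map_le_iff_le_comap.2 fun g hg => ?_
    simpa using add_mem (Ideal.mem_sup_left (hψ g)) (Ideal.mem_sup_right hg)

section MvPolynomial

variable {σ k : Type*} [CommRing k]

theorem aeval_sub_self_mem {v : σ → MvPolynomial σ k} {I : Ideal (MvPolynomial σ k)}
    (hv : ∀ s, v s - X s ∈ I) (g : MvPolynomial σ k) : aeval v g - g ∈ I := by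
  suffices (Ideal.Quotient.mkₐ k I).comp (aeval v) = Ideal.Quotient.mkₐ k I from
    Ideal.Quotient.eq.1 (DFunLike.congr_fun this g)
  ext s
  simpa using Ideal.Quotient.eq.2 (hv s)

theorem killCompl_some_surjective :
    Function.Surjective (killCompl (R := k) (Option.some_injective σ)) := fun g =>
  ⟨rename some g, killCompl_rename_app _ g⟩

@[simp]
theorem killCompl_some_X_none : killCompl (R := k) (Option.some_injective σ) (X none) = 0 := by
  simp [killCompl]

@[simp]
theorem killCompl_some_X_some (y : σ) :
    killCompl (R := k) (Option.some_injective σ) (X (some y)) = X y := by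
  rw [← rename_X, killCompl_rename_app]

theorem ker_killCompl_some :
    RingHom.ker (killCompl (R := k) (Option.some_injective σ)) = Ideal.span {X none} := by
  refine le_antisymm (fun g hg => ?_) (by simp [Ideal.span_le])
  let ψ : MvPolynomial (Option σ) k →ₐ[k] MvPolynomial (Option σ) k :=
    (rename some).comp (killCompl (Option.some_injective σ))
  have hψ : ψ g = 0 := by
    rw [AlgHom.comp_apply, RingHom.mem_ker.1 hg, map_zero]
  have hmem : aeval (fun o => ψ (X o)) g - g ∈ Ideal.span {X none} :=
    aeval_sub_self_mem (fun o => by cases o <;> simp [ψ]) g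
  rwa [show aeval (fun o => ψ (X o)) g = ψ g from (DFunLike.congr_fun (aeval_unique ψ) g).symm,
    hψ, zero_sub, neg_mem_iff] at hmem

end MvPolynomial

section Rectangular

variable (k : Type*) [CommRing k] (m p : ℕ)

/-- The ideal `J_i^t` for an `(m + 2) × p` matrix of variables over `k`; the variable `t` is
`X none`. -/
noncomputable def rowRelationIdeal (i : ℕ) :
    Ideal (MvPolynomial (Option (Fin (m + 2) × Fin p)) k) :=
  Ideal.span {f | ∃ l : Fin p, (l : ℕ) < i ∧
    f = X none * X (some (0, l)) + X (some (Fin.last _, l))}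

/-- The matrix of the variables in the first `j` columns, without the first row, so that `K_j` is
generated by its maximal minors. -/
noncomputable def lowerMatrix {p j : ℕ} (hj : j ≤ p) :
    Matrix (Fin (m + 1)) (Fin j) (MvPolynomial (Option (Fin (m + 2) × Fin p)) k) :=
  Matrix.of fun a b => X (some (a.succ, Fin.castLE hj b))

/-- The elimination of the variables in the last row by means of `rowRelationIdeal k m p i`. -/
noncomputable def eliminateLastRow (i : ℕ) :
    MvPolynomial (Option (Fin (m + 2) × Fin p)) k →ₐ[k]
      MvPolynomial (Option (Fin (m + 2) × Fin p)) k :=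
  aeval fun
    | none => X none
    | some (a, l) =>
      if a = Fin.last _ ∧ (l : ℕ) < i then -(X none * X (some (0, l))) else X (some (a, l))

variable {k m p} {i : ℕ}

@[simp]
theorem eliminateLastRow_X_none : eliminateLastRow k m p i (X none) = X none := by
  simp [eliminateLastRow]

@[simp]
theorem eliminateLastRow_X_some (a : Fin (m + 2)) (l : Fin p) :
    eliminateLastRow k m p i (X (some (a, l))) =
      if a = Fin.last _ ∧ (l : ℕ) < i then -(X none * X (some (0, l))) else X (some (a, l)) := by
  simp [eliminateLastRow]

theorem eliminateLastRow_sub_self_mem (g : MvPolynomial (Option (Fin (m + 2) × Fin p)) k) :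
    eliminateLastRow k m p i g - g ∈ rowRelationIdeal k m p i := by
  refine aeval_sub_self_mem (fun s => ?_) g
  rcases s with _ | ⟨a, l⟩
  · simp
  · dsimp only
    split_ifs with h
    · rw [h.1, ← neg_add', neg_mem_iff]
      exact Ideal.subset_span ⟨l, h.2, rfl⟩
    · simp

theorem rowRelationIdeal_le_ker_eliminateLastRow :
    rowRelationIdeal k m p i ≤ RingHom.ker (eliminateLastRow k m p i) := by
  refine Ideal.span_le.2 ?_
  rintro _ ⟨l, hl, rfl⟩
  simp [hl, Fin.ext_iff]

theorem isEagonNorthcottPresented_map_eliminateLastRow_map_killCompl {j : ℕ} (hij : i < j)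
    (hj : j ≤ p) :
    IsEagonNorthcottPresented
      (((lowerMatrix k m hj).map (eliminateLastRow k m p i)).map
        (killCompl (Option.some_injective _))) := by
  obtain _ | j := j
  · exact absurd hij i.not_lt_zero
  let s : Fin (m + 2) × Fin p := (Fin.last _, Fin.castLE hj (Fin.last j))
  have hupper (a : Fin m) (b : Fin (j + 1)) : (a.castSucc.succ, Fin.castLE hj b) ≠ s := by
    simp [s, Fin.ext_iff, a.2.ne]
  have hlast (b : Fin j) : (Fin.last (m + 1), Fin.castLE hj b.castSucc) ≠ s := by
    simp [s, Fin.ext_iff, b.2.ne]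
  refine isEagonNorthcottPresented_of_corner_eq_X (s := s)
    (N := genericMatrix k fun a b => ⟨_, hupper a b⟩)
    (isEagonNorthcottPresented_genericMatrix k ?_) (isEagonNorthcottPresented_genericMatrix k ?_)
    (fun b => if (b : ℕ) < i then 0 else X ⟨_, hlast b⟩) (fun a b => ?_) (fun b => ?_) ?_
  · intro a a' b b' h
    simpa using h
  · intro a a' b b' h
    simpa using h
  · simp [lowerMatrix, genericMatrix, Fin.ext_iff, a.2.ne]
  · by_cases hb : (b : ℕ) < i <;> simp [lowerMatrix, hb]
  · simp [lowerMatrix, s, (Nat.lt_succ_iff.1 hij).not_gt]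

theorem isSMulRegular_quotient_maxMinorIdeal_map_eliminateLastRow {j : ℕ} (hij : i < j)
    (hj : j ≤ p) :
    IsSMulRegular (MvPolynomial (Option (Fin (m + 2) × Fin p)) k ⧸
      maxMinorIdeal ((lowerMatrix k m hj).map (eliminateLastRow k m p i)))
      (X none : MvPolynomial (Option (Fin (m + 2) × Fin p)) k) :=
  IsEagonNorthcottPresented.isSMulRegular_quotient_of_ker_eq_span
    (φ := RingHomClass.toRingHom (killCompl (R := k) (Option.some_injective (Fin (m + 2) × Fin p))))
    killCompl_some_surjective ker_killCompl_some isRegular_X.left.isSMulRegular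
    (isEagonNorthcottPresented_map_eliminateLastRow_map_killCompl hij hj)

theorem mem_rowRelationIdeal_sup_maxMinorIdeal_iff {j : ℕ} {hj : j ≤ p}
    {f : MvPolynomial (Option (Fin (m + 2) × Fin p)) k} :
    f ∈ rowRelationIdeal k m p i ⊔ maxMinorIdeal (lowerMatrix k m hj) ↔
      eliminateLastRow k m p i f ∈
        maxMinorIdeal ((lowerMatrix k m hj).map (eliminateLastRow k m p i)) := by
  have h := mem_sup_iff_map_mem (f := f) (K := maxMinorIdeal (lowerMatrix k m hj))
    (ψ := RingHomClass.toRingHom (eliminateLastRow k m p i))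
    eliminateLastRow_sub_self_mem rowRelationIdeal_le_ker_eliminateLastRow
  rwa [map_maxMinorIdeal] at h

theorem Jt_add_Kt_tSaturated_general {j : ℕ} (hij : i < j) (hj : j ≤ p)
    (f : MvPolynomial (Option (Fin (m + 2) × Fin p)) k) (e : ℕ)
    (hf : X none ^ e * f ∈ rowRelationIdeal k m p i ⊔ maxMinorIdeal (lowerMatrix k m hj)) :
    f ∈ rowRelationIdeal k m p i ⊔ maxMinorIdeal (lowerMatrix k m hj) := by
  rw [mem_rowRelationIdeal_sup_maxMinorIdeal_iff] at hf ⊢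
  rw [map_mul, map_pow, eliminateLastRow_X_none] at hf
  have hreg := isSMulRegular_quotient_maxMinorIdeal_map_eliminateLastRow (k := k) (m := m) hij hj
  exact (isSMulRegular_quotient_iff_mem_of_smul_mem _ _).1 (hreg.pow e) _ hf

end Rectangular

theorem Jt_add_two (m i : ℕ) [NeZero (m + 2)] : Jt (m + 2) i = rowRelationIdeal ℂ m (m + 2) i :=
  rfl

theorem Kt_add_two (m : ℕ) [NeZero (m + 2)] {j : ℕ} (hj : j ≤ m + 2) :
    Kt (m + 2) j = maxMinorIdeal (lowerMatrix ℂ m hj) := by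
  have hcol (b : Fin j) :
      (⟨b % (m + 2), Nat.mod_lt _ (m + 1).succ_pos⟩ : Fin (m + 2)) = Fin.castLE hj b :=
    Fin.ext (Nat.mod_eq_of_lt (b.2.trans_le hj))
  have hdet (C : Fin j → Fin (m + 1)) :
      Matrix.det (Matrix.of fun a b : Fin j => zz (m + 2) (C a).succ
        ⟨b % (m + 2), Nat.mod_lt _ (m + 1).succ_pos⟩) =
      ((lowerMatrix ℂ m hj).submatrix C id).det := by
    simp only [hcol]
    rfl
  refine congrArg Ideal.span (Set.ext fun f => ⟨?_, ?_⟩)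
  · rintro ⟨B, hB, hB0, rfl⟩
    choose C hC using fun a => Fin.exists_succ_eq.2 (Fin.pos_iff_ne_zero.1 (hB0 a))
    obtain rfl : (fun a => (C a).succ) = B := funext hC
    exact ⟨OrderEmbedding.ofStrictMono C fun a a' h => Fin.succ_lt_succ_iff.1 (hB h),
      (hdet C).symm⟩
  · rintro ⟨C, rfl⟩
    exact ⟨fun a => (C a).succ, fun a a' h => Fin.succ_lt_succ_iff.2 (C.strictMono h),
      fun a => Nat.le_add_left 1 _, (hdet C).symm⟩

/-- For all `0 ≤ i < j ≤ n`, the ideal `J_i^t + K_j` of `ℂ[t, z_{11}, …, z_{nn}]`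
is saturated with respect to `t`: if `t^k f ∈ J_i^t + K_j` then `f ∈ J_i^t + K_j`. -/
theorem Jt_add_Kt_tSaturated (n : ℕ) [NeZero n] (hn : 2 ≤ n) (i j : ℕ)
    (hij : i < j) (hj : j ≤ n) :
    ∀ (f : MvPolynomial (Option (Fin n × Fin n)) ℂ) (k : ℕ),
      (tt n) ^ k * f ∈ Jt n i + Kt n j → f ∈ Jt n i + Kt n j := by
  obtain ⟨m, rfl⟩ := Nat.exists_eq_add_of_le' hn
  rw [Jt_add_two, Kt_add_two m hj]
  exact Jt_add_Kt_tSaturated_general hij hj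
end
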